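/- arXiv:2403.09730 — 14 statements merged into one kernel-verified Lean document; each statement's English description precedes it below -/
import Mathlib

section
/- Assume m u∞² > γRT∞. Then c∞ > 1, f(1) = 0 and f(c∞) < 0, f(n) → +∞ as n → 0⁺, and the restriction of f to the interval (0, c∞] is a strictly decreasing bijection from (0, c∞] onto [f(c∞), ∞). -/
open Real Set Filter

/-- Assume `m u∞² > γRT∞`. Then `c∞ > 1`, `f(1) = 0`, `f(c∞) < 0`, `f(n) → +∞` as
`n → 0⁺`, and the restriction of `f` to `(0, c∞]` is a strictly decreasing bijection
from `(0, c∞]` onto `[f(c∞), ∞)`. -/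
theorem sagdeev_supersonic_properties
    (γ R Tinf m uinf : ℝ) (hγ : 1 < γ) (hR : 0 < R) (hT : 0 < Tinf) (hm : 0 < m)
    (hu : uinf < 0)
    (f : ℝ → ℝ)
    (hf : ∀ n : ℝ, f n =
      (γ * R * Tinf / (γ - 1)) * (n ^ (γ - 1) - 1)
        + (m * uinf ^ 2 / 2) * (n ^ (-2 : ℝ) - 1))
    (cinf : ℝ) (hc : cinf = (m * uinf ^ 2 / (γ * R * Tinf)) ^ ((1 : ℝ) / (γ + 1)))
    (hsup : γ * R * Tinf < m * uinf ^ 2) :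
    1 < cinf ∧
    f 1 = 0 ∧
    f cinf < 0 ∧
    Tendsto f (nhdsWithin 0 (Ioi 0)) atTop ∧
    StrictAntiOn f (Ioc 0 cinf) ∧
    BijOn f (Ioc 0 cinf) (Ici (f cinf)) := by
  have hA : 0 < γ * R * Tinf := by positivity
  set A := γ * R * Tinf with hAdef
  set B := m * uinf ^ 2 with hBdef
  have hB : 0 < B := hA.trans hsup
  have hBA : 1 < B / A := (one_lt_div hA).2 hsup
  have hg : 0 < γ + 1 := by linarith
  have hg1 : 0 < γ - 1 := by linarith
  have hc1 : 1 < cinf := by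
    rw [hc]; exact Real.one_lt_rpow hBA (by positivity)
  have hc0 : 0 < cinf := by linarith
  have hcpow : cinf ^ (γ + 1) = B / A := by
    rw [hc, ← Real.rpow_mul (by positivity), one_div, inv_mul_cancel₀ hg.ne', Real.rpow_one]
  have hf1 : f 1 = 0 := by rw [hf]; simp
  have hd : ∀ x : ℝ, 0 < x →
      HasDerivAt f (A * x ^ (γ - 2) - B * x ^ (-3 : ℝ)) x := by
    intro x hx
    have h1 := Real.hasDerivAt_rpow_const (x := x) (p := γ - 1) (Or.inl hx.ne')
    have h2 := Real.hasDerivAt_rpow_const (x := x) (p := (-2 : ℝ)) (Or.inl hx.ne')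
    have h3 := ((h1.sub_const 1).const_mul (A / (γ - 1))).add
      ((h2.sub_const 1).const_mul (B / 2))
    have hfe : f = fun n : ℝ => (A / (γ - 1)) * (n ^ (γ - 1) - 1)
        + (B / 2) * (n ^ (-2 : ℝ) - 1) := funext hf
    rw [hfe]
    refine h3.congr_deriv ?_
    rw [show γ - 1 - 1 = γ - 2 by ring, show (-2 : ℝ) - 1 = -3 by norm_num]
    field_simp
    ring
  have hcont : ContinuousOn f (Ioc 0 cinf) := fun x hx =>
    (hd x hx.1).continuousAt.continuousWithinAt
  have hanti : StrictAntiOn f (Ioc 0 cinf) := by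
    refine strictAntiOn_of_deriv_neg (convex_Ioc 0 cinf) hcont ?_
    intro x hx
    rw [interior_Ioc] at hx
    rw [(hd x hx.1).deriv]
    have e : x ^ (γ - 2) = x ^ (γ + 1) * x ^ (-3 : ℝ) := by
      rw [← Real.rpow_add hx.1]; congr 1; ring
    have hlt : x ^ (γ + 1) < B / A := by
      rw [← hcpow]; exact Real.rpow_lt_rpow hx.1.le hx.2 hg
    have hp : 0 < x ^ (-3 : ℝ) := Real.rpow_pos_of_pos hx.1 _
    rw [lt_div_iff₀ hA] at hlt
    rw [e]
    nlinarith
  have hlim : Tendsto f (nhdsWithin 0 (Ioi 0)) atTop := by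
    have h1 : Tendsto (fun n : ℝ => n ^ (-2 : ℝ)) (nhdsWithin 0 (Ioi 0)) atTop :=
      tendsto_rpow_neg_nhdsGT_zero (by norm_num)
    have h2 : Tendsto (fun n : ℝ => (B / 2) * n ^ (-2 : ℝ) + (-(A / (γ - 1)) - B / 2))
        (nhdsWithin 0 (Ioi 0)) atTop :=
      tendsto_atTop_add_const_right _ _ (h1.const_mul_atTop (by positivity))
    refine tendsto_atTop_mono' _ ?_ h2
    filter_upwards [self_mem_nhdsWithin] with x hx
    have hx0 : 0 ≤ x ^ (γ - 1) := Real.rpow_nonneg (le_of_lt hx) _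
    have : 0 ≤ A / (γ - 1) * x ^ (γ - 1) := by positivity
    rw [hf]
    linarith
  refine ⟨hc1, hf1, ?_, hlim, hanti, ?_, hanti.injOn, ?_⟩
  · rw [← hf1]; exact hanti ⟨one_pos, hc1.le⟩ ⟨hc0, le_rfl⟩ hc1
  · intro x hx
    exact hanti.antitoneOn hx ⟨hc0, le_rfl⟩ hx.2
  · intro y hy
    have hev : ∀ᶠ x in nhdsWithin (0 : ℝ) (Ioi 0), x ∈ Ioo 0 cinf := Ioo_mem_nhdsGT hc0
    obtain ⟨a, ha, hya⟩ := (hev.and (hlim.eventually_ge_atTop y)).exists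
    have hsub : Icc a cinf ⊆ Ioc 0 cinf := fun z hz => ⟨ha.1.trans_le hz.1, hz.2⟩
    obtain ⟨z, hz, rfl⟩ := intermediate_value_Icc' ha.2.le (hcont.mono hsub) ⟨hy, hya⟩
    exact ⟨z, hsub hz, rfl⟩
end

section
/- Assume m u∞² > γRT∞, and let g : [f(c∞), ∞) → (0, c∞] be the inverse of the restriction of f to (0, c∞]. Then g(0) = 1, g is differentiable at 0 with g'(0) = 1/(γRT∞ − m u∞²), and consequently the function η ↦ g(η) − e^{−η} is differentiable at 0 with derivative 1 + 1/(γRT∞ − m u∞²); this derivative is strictly positive if and only if m u∞² > γRT∞ + 1 (the nondegenerate Bohm criterion). -/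
open Real Set Filter

/-- Assume `m u∞² > γRT∞` and let `g` be the inverse of the restriction of the Sagdeev
function `f` to `(0, c∞]` (a bijection onto `[f(c∞), ∞)`).  Then `g(0) = 1`, `g` is
differentiable at `0` with `g'(0) = 1/(γRT∞ − m u∞²)`, the function
`η ↦ g(η) − e^{−η}` is differentiable at `0` with derivative `1 + 1/(γRT∞ − m u∞²)`,
and this derivative is strictly positive iff `m u∞² > γRT∞ + 1`. -/
theorem sagdeev_inverse_derivative
    (γ R Tinf m uinf : ℝ) (hγ : 1 < γ) (hR : 0 < R) (hT : 0 < Tinf) (hm : 0 < m)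
    (hu : uinf < 0)
    (f : ℝ → ℝ)
    (hf : ∀ n : ℝ, f n =
      (γ * R * Tinf / (γ - 1)) * (n ^ (γ - 1) - 1)
        + (m * uinf ^ 2 / 2) * (n ^ (-2 : ℝ) - 1))
    (cinf : ℝ) (hc : cinf = (m * uinf ^ 2 / (γ * R * Tinf)) ^ ((1 : ℝ) / (γ + 1)))
    (hsup : γ * R * Tinf < m * uinf ^ 2)
    (g : ℝ → ℝ)
    (hg₁ : ∀ n ∈ Ioc (0 : ℝ) cinf, g (f n) = n)
    (hg₂ : ∀ y ∈ Ici (f cinf), f (g y) = y)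
    (hg₃ : MapsTo g (Ici (f cinf)) (Ioc 0 cinf)) :
    g 0 = 1 ∧
    HasDerivAt g (1 / (γ * R * Tinf - m * uinf ^ 2)) 0 ∧
    HasDerivAt (fun η => g η - Real.exp (-η))
      (1 + 1 / (γ * R * Tinf - m * uinf ^ 2)) 0 ∧
    (0 < 1 + 1 / (γ * R * Tinf - m * uinf ^ 2) ↔ γ * R * Tinf + 1 < m * uinf ^ 2) := by
  have ha : 0 < γ * R * Tinf := by positivity
  have hγ1 : γ - 1 ≠ 0 := by linarith
  have hd : γ * R * Tinf - m * uinf ^ 2 < 0 := by linarith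
  have hc1 : 1 < cinf := by
    rw [hc]
    apply Real.one_lt_rpow
    · rw [lt_div_iff₀ ha]; linarith
    · have : 0 < γ + 1 := by linarith
      positivity
  have hf1 : f 1 = 0 := by rw [hf]; simp
  have hg0 : g 0 = 1 := by
    rw [← hf1]; exact hg₁ 1 ⟨one_pos, hc1.le⟩
  have hfd : HasStrictDerivAt f (γ * R * Tinf - m * uinf ^ 2) 1 := by
    have h1 := Real.hasStrictDerivAt_rpow_const_of_ne (x := 1) one_ne_zero (γ - 1)
    have h2 := Real.hasStrictDerivAt_rpow_const_of_ne (x := 1) one_ne_zero (-2 : ℝ)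
    have h3 := (HasStrictDerivAt.const_mul (γ * R * Tinf / (γ - 1)) (h1.sub_const 1)).add
      (HasStrictDerivAt.const_mul (m * uinf ^ 2 / 2) (h2.sub_const 1))
    have hff : f = _ := funext hf
    rw [hff]
    refine HasStrictDerivAt.congr_deriv h3 ?_
    simp only [Real.one_rpow]
    field_simp
    ring
  have hev : ∀ᶠ x in nhds (1 : ℝ), g (f x) = x := by
    filter_upwards [Ioo_mem_nhds one_pos hc1] with x hx
    exact hg₁ x ⟨hx.1, hx.2.le⟩
  have hgd : HasDerivAt g (1 / (γ * R * Tinf - m * uinf ^ 2)) 0 := by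
    have h := (hfd.to_local_left_inverse hd.ne hev).hasDerivAt
    rw [hf1] at h
    rwa [one_div]
  refine ⟨hg0, hgd, ?_, ?_⟩
  · have h := hgd.sub (hasDerivAt_neg (0 : ℝ)).exp
    refine HasDerivAt.congr_deriv h ?_
    simp only [neg_zero, Real.exp_zero]
    ring
  · have e : 1 + 1 / (γ * R * Tinf - m * uinf ^ 2)
        = (m * uinf ^ 2 - γ * R * Tinf - 1) / (m * uinf ^ 2 - γ * R * Tinf) := by
      have h1 := hd.ne
      have h2 : m * uinf ^ 2 - γ * R * Tinf ≠ 0 := by linarith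
      rw [eq_div_iff h2, ← neg_sub (γ * R * Tinf)]
      field_simp
      ring
    rw [e, div_pos_iff_of_pos_right (by linarith)]
    constructor <;> intro h <;> linarith
end

section
/- For every real γ > 1, the equation λ(λ−1)(λ−2) − 12(2λ/(1+γ) + 2) = 0 has exactly one real solution λ₀; the equation λ(λ−1)(λ−2) − 12(λ+2) = 0 also has exactly one real solution μ₀; and 4 < λ₀ < μ₀. -/
lemma cubic_aux (c : ℝ) (hc : 0 < c) (hc1 : c ≤ 1) :
    ∃ r : ℝ, 4 < r ∧ ∀ x : ℝ, x * (x - 1) * (x - 2) - 12 * (c * x + 2) = 0 ↔ x = r := by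
  have big : ∀ x : ℝ, x * (x - 1) * (x - 2) - 12 * (c * x + 2) = 0 → 4 < x := by
    intro x hx
    by_contra h
    push Not at h
    rcases lt_or_ge x 0 with h0 | h0
    · have h1 : 0 ≤ (1 - c) * (-x) := mul_nonneg (by linarith) (by linarith)
      have h2 : 0 < (-x) * x ^ 2 :=
        mul_pos (by linarith) (sq_pos_of_neg h0)
      nlinarith [sq_nonneg (3 * x + 5)]
    · have h1 : 0 ≤ c * x := by positivity
      have h2 : 0 ≤ (4 - x) * (x ^ 2 + x + 6) := mul_nonneg (by linarith) (by positivity)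
      have h3 : (4 - x) * (x ^ 2 + x + 6) = 0 := by nlinarith
      have h4 : c * x = 0 := by nlinarith
      have h5 : x = 0 := by
        rcases mul_eq_zero.1 h4 with h | h
        · linarith
        · exact h
      subst h5
      norm_num at h3
  have hcont : ContinuousOn (fun x : ℝ => x * (x - 1) * (x - 2) - 12 * (c * x + 2))
      (Set.Icc 4 7) := by fun_prop
  obtain ⟨r, -, hr⟩ := intermediate_value_Icc (by norm_num : (4 : ℝ) ≤ 7) hcont
    (show (0 : ℝ) ∈ Set.Icc _ _ from ⟨by norm_num; linarith, by norm_num; linarith⟩)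
  simp only at hr
  have hr4 := big r hr
  refine ⟨r, hr4, fun x => ⟨fun hx => ?_, fun h => h ▸ hr⟩⟩
  have hx4 := big x hx
  have h : (x - r) * (x ^ 2 + x * r + r ^ 2 - 3 * (x + r) + 2 - 12 * c) = 0 := by
    linear_combination hx - hr
  rcases mul_eq_zero.1 h with h | h
  · linarith
  · nlinarith [mul_pos (sub_pos.2 hx4) (sub_pos.2 hr4), sq_nonneg (x - 4), sq_nonneg (r - 4)]

/-- For every real `γ > 1`, the cubic equation `λ(λ−1)(λ−2) − 12(2λ/(1+γ) + 2) = 0`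
has exactly one real solution `λ₀`, the equation `λ(λ−1)(λ−2) − 12(λ+2) = 0` has
exactly one real solution `μ₀`, and `4 < λ₀ < μ₀`. -/
theorem cubic_unique_roots (γ : ℝ) (hγ : 1 < γ) :
    ∃ l₀ μ₀ : ℝ,
      (∀ x : ℝ, x * (x - 1) * (x - 2) - 12 * (2 * x / (1 + γ) + 2) = 0 ↔ x = l₀) ∧
      (∀ x : ℝ, x * (x - 1) * (x - 2) - 12 * (x + 2) = 0 ↔ x = μ₀) ∧
      4 < l₀ ∧ l₀ < μ₀ := by
  have hp : 0 < 1 + γ := by linarith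
  have hc1 : 2 / (1 + γ) < 1 := by rw [div_lt_one hp]; linarith
  obtain ⟨l, hl4, hl⟩ := cubic_aux (2 / (1 + γ)) (by positivity) hc1.le
  obtain ⟨m, hm4, hm⟩ := cubic_aux 1 one_pos le_rfl
  refine ⟨l, m, fun x => ?_, fun x => ?_, hl4, ?_⟩
  · rw [← hl x, div_mul_eq_mul_div]
  · rw [← hm x, one_mul]
  · have h1 := (hl l).2 rfl
    have h2 := (hm m).2 rfl
    by_contra h
    push Not at h
    have h3 : 0 < (1 - 2 / (1 + γ)) * l := mul_pos (by linarith) (by linarith)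
    have h4 : 0 ≤ (l - m) * (l ^ 2 + l * m + m ^ 2 - 3 * (l + m) + 2 - 12) := by
      apply mul_nonneg (by linarith)
      nlinarith [mul_pos (sub_pos.2 hl4) (sub_pos.2 hm4), sq_nonneg (l - 4), sq_nonneg (m - 4)]
    have h5 : (l - m) * (l ^ 2 + l * m + m ^ 2 - 3 * (l + m) + 2 - 12)
        = -12 * ((1 - 2 / (1 + γ)) * l) := by
      linear_combination h1 - h2
    linarith
end

section
/- Let γ > 1, R > 0, T∞ > 0, m > 0 and u∞ < 0 be real constants. Suppose ñ, ũ, T̃, φ̃ : [0,∞) → ℝ are differentiable, ñ > 0 and T̃ > 0 everywhere, and for all x ≥ 0: (ñũ)'(x) = 0, ũ(x)T̃'(x) + (γ−1)T̃(x)ũ'(x) = 0, and m ñ(x)ũ(x)ũ'(x) + (R T̃ ñ)'(x) = ñ(x)φ̃'(x); assume ñ → 1, ũ → u∞, T̃ → T∞ and φ̃ → 0 as x → ∞. Then φ̃(x) = f(ñ(x)) for all x ≥ 0, where f is the Sagdeev function. -/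
open Real Set Filter

lemma const_of_deriv_zero_of_lim (g : ℝ → ℝ) (c : ℝ)
    (hg : ∀ x ∈ Ici (0 : ℝ), HasDerivWithinAt g 0 (Ici 0) x)
    (hlim : Tendsto g atTop (nhds c)) : ∀ x ∈ Ici (0 : ℝ), g x = c := by
  intro x hx
  have key : ∀ y ∈ Ici (0 : ℝ), g y = g x := by
    intro y hy
    have h := (convex_Ici (0 : ℝ)).norm_image_sub_le_of_norm_hasDerivWithin_le
      (f := g) (f' := fun _ => 0) (C := 0) hg (by simp) hx hy
    have h2 : ‖g y - g x‖ ≤ 0 := by simpa using h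
    exact sub_eq_zero.mp (norm_le_zero_iff.mp h2)
  have h1 : Tendsto g atTop (nhds (g x)) := by
    refine tendsto_const_nhds.congr' ?_
    filter_upwards [eventually_ge_atTop (0 : ℝ)] with y hy
    exact (key y hy).symm
  exact tendsto_nhds_unique h1 hlim

/-- Bernoulli law for the stationary sheath: under the stationary mass, temperature and
momentum equations with the far-field conditions, the potential satisfies
`φ̃(x) = f(ñ(x))` for all `x ≥ 0`, where `f` is the Sagdeev function. -/
theorem stationary_bernoulli_law
    (γ R Tinf m uinf : ℝ) (hγ : 1 < γ) (hR : 0 < R) (hT : 0 < Tinf) (hm : 0 < m)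
    (hu : uinf < 0)
    (f : ℝ → ℝ)
    (hf : ∀ n : ℝ, f n =
      (γ * R * Tinf / (γ - 1)) * (n ^ (γ - 1) - 1)
        + (m * uinf ^ 2 / 2) * (n ^ (-2 : ℝ) - 1))
    (n u T φ n' u' T' φd p' : ℝ → ℝ)
    (hn : ∀ x ∈ Ici (0 : ℝ), HasDerivWithinAt n (n' x) (Ici 0) x)
    (hud : ∀ x ∈ Ici (0 : ℝ), HasDerivWithinAt u (u' x) (Ici 0) x)
    (hTd : ∀ x ∈ Ici (0 : ℝ), HasDerivWithinAt T (T' x) (Ici 0) x)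
    (hφd : ∀ x ∈ Ici (0 : ℝ), HasDerivWithinAt φ (φd x) (Ici 0) x)
    (hpd : ∀ x ∈ Ici (0 : ℝ),
      HasDerivWithinAt (fun y => R * T y * n y) (p' x) (Ici 0) x)
    (hnpos : ∀ x ∈ Ici (0 : ℝ), 0 < n x)
    (hTpos : ∀ x ∈ Ici (0 : ℝ), 0 < T x)
    (hmass : ∀ x ∈ Ici (0 : ℝ), n' x * u x + n x * u' x = 0)
    (htemp : ∀ x ∈ Ici (0 : ℝ), u x * T' x + (γ - 1) * T x * u' x = 0)
    (hmom : ∀ x ∈ Ici (0 : ℝ), m * n x * u x * u' x + p' x = n x * φd x)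
    (hnlim : Tendsto n atTop (nhds 1))
    (hulim : Tendsto u atTop (nhds uinf))
    (hTlim : Tendsto T atTop (nhds Tinf))
    (hφlim : Tendsto φ atTop (nhds 0)) :
    ∀ x ∈ Ici (0 : ℝ), φ x = f (n x) := by
  have hγ0 : γ - 1 ≠ 0 := by linarith
  have hnu : ∀ x ∈ Ici (0 : ℝ), n x * u x = uinf := by
    refine const_of_deriv_zero_of_lim (fun x => n x * u x) uinf ?_ ?_
    · intro x hx
      have h := (hn x hx).mul (hud x hx)
      rw [hmass x hx] at h
      exact h
    · simpa using hnlim.mul hulim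
  have hu0 : ∀ x ∈ Ici (0 : ℝ), u x ≠ 0 := by
    intro x hx h
    have := hnu x hx
    rw [h, mul_zero] at this
    linarith
  have hTn : ∀ x ∈ Ici (0 : ℝ), T' x * n x = (γ - 1) * T x * n' x := by
    intro x hx
    apply mul_left_cancel₀ (hu0 x hx)
    linear_combination n x * htemp x hx - (γ - 1) * T x * hmass x hx
  have hTc : ∀ x ∈ Ici (0 : ℝ), T x * n x ^ (1 - γ) = Tinf := by
    refine const_of_deriv_zero_of_lim (fun x => T x * n x ^ (1 - γ)) Tinf ?_ ?_
    · intro x hx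
      have h := (hTd x hx).mul ((hn x hx).rpow_const (p := 1 - γ) (Or.inl (hnpos x hx).ne'))
      refine h.congr_deriv ?_
      have e : n x ^ (1 - γ) = n x ^ (1 - γ - 1) * n x := by
        conv_rhs => rw [← Real.rpow_add_one (hnpos x hx).ne']
        congr 1
        ring
      rw [e]
      linear_combination n x ^ (1 - γ - 1) * hTn x hx
    · simpa using hTlim.mul (hnlim.rpow_const (p := 1 - γ) (Or.inl one_ne_zero))
  have hB : ∀ x ∈ Ici (0 : ℝ), φ x - m / 2 * (u x * u x) - γ * R / (γ - 1) * T x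
      = 0 - m / 2 * (uinf * uinf) - γ * R / (γ - 1) * Tinf := by
    refine const_of_deriv_zero_of_lim
      (fun x => φ x - m / 2 * (u x * u x) - γ * R / (γ - 1) * T x) _ ?_ ?_
    · intro x hx
      have h := ((hφd x hx).sub (((hud x hx).mul (hud x hx)).const_mul (m / 2))).sub
        ((hTd x hx).const_mul (γ * R / (γ - 1)))
      refine h.congr_deriv ?_
      have hp : p' x = R * T' x * n x + R * T x * n' x :=
        (uniqueDiffOn_Ici (0 : ℝ) x hx).eq_deriv _ (hpd x hx)
          (((hTd x hx).const_mul R).mul (hn x hx))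
      apply mul_left_cancel₀ (hnpos x hx).ne'
      have hmx := hmom x hx
      rw [hp] at hmx
      have e := hTn x hx
      field_simp
      linear_combination (-2 * (γ - 1)) * hmx - 2 * R * e
    · exact (hφlim.sub ((hulim.mul hulim).const_mul _)).sub (hTlim.const_mul _)
  intro x hx
  have hp := hnpos x hx
  have e1 : T x = Tinf * n x ^ (γ - 1) := by
    rw [← hTc x hx, mul_assoc, ← Real.rpow_add hp]
    simp
  have e2 : u x * u x = uinf ^ 2 * n x ^ (-2 : ℝ) := by
    rw [← hnu x hx, Real.rpow_neg hp.le, Real.rpow_two]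
    field_simp
  have h := hB x hx
  rw [e1, e2] at h
  rw [hf]
  linear_combination h
end

section
/- Let γ > 1, R > 0, T∞ > 0, m > 0 and u∞ < 0 with m u∞² > γRT∞. Suppose ñ, ũ, T̃, φ̃ : [0,∞) → ℝ satisfy the hypotheses of the Bernoulli law (so that φ̃(x) = f(ñ(x)) for all x), suppose in addition that φ̃ is twice differentiable with φ̃''(x) = ñ(x) − e^{−φ̃(x)} for all x ≥ 0, and that ñ(x) ∈ (0, c∞] for all x ≥ 0. Then the potential solves the Sagdeev ordinary differential equation: φ̃''(x) = g(φ̃(x)) − e^{−φ̃(x)} for all x ≥ 0, where g : [f(c∞), ∞) → (0, c∞] is the inverse of the restriction of f to (0, c∞]. -/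
open Real Set Filter

theorem const_of_deriv_zero (F : ℝ → ℝ) (L : ℝ)
    (hF : ∀ x ∈ Ici (0 : ℝ), HasDerivWithinAt F 0 (Ici 0) x)
    (hL : Tendsto F atTop (nhds L)) : ∀ x ∈ Ici (0 : ℝ), F x = L := by
  have hc : ∀ x ∈ Ici (0 : ℝ), ∀ y ∈ Ici (0 : ℝ), F x = F y := by
    intro x hx y hy
    have := (convex_Ici (0 : ℝ)).norm_image_sub_le_of_norm_hasDerivWithin_le
      (C := 0) hF (by simp) hx hy
    rw [zero_mul] at this
    have h2 := norm_le_zero_iff.1 this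
    linarith
  intro x hx
  refine tendsto_nhds_unique (tendsto_const_nhds.congr' ?_) hL
  filter_upwards [eventually_ge_atTop (0 : ℝ)] with y hy
  exact hc x hx y hy

/-- Under the hypotheses of the Bernoulli law and the Poisson equation
`φ̃'' = ñ − e^{−φ̃}`, with `ñ` taking values in `(0, c∞]`, the potential solves the
Sagdeev ordinary differential equation `φ̃'' = g(φ̃) − e^{−φ̃}`, where `g` is the
inverse of the restriction of the Sagdeev function `f` to `(0, c∞]`. -/
theorem stationary_sagdeev_ode
    (γ R Tinf m uinf : ℝ) (hγ : 1 < γ) (hR : 0 < R) (hT : 0 < Tinf) (hm : 0 < m)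
    (hu : uinf < 0) (hsup : γ * R * Tinf < m * uinf ^ 2)
    (f : ℝ → ℝ)
    (hf : ∀ n : ℝ, f n =
      (γ * R * Tinf / (γ - 1)) * (n ^ (γ - 1) - 1)
        + (m * uinf ^ 2 / 2) * (n ^ (-2 : ℝ) - 1))
    (cinf : ℝ) (hc : cinf = (m * uinf ^ 2 / (γ * R * Tinf)) ^ ((1 : ℝ) / (γ + 1)))
    (g : ℝ → ℝ)
    (hg : ∀ y ∈ Ioc (0 : ℝ) cinf, g (f y) = y)
    (n u T φ n' u' T' φd p' : ℝ → ℝ)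
    (hn : ∀ x ∈ Ici (0 : ℝ), HasDerivWithinAt n (n' x) (Ici 0) x)
    (hud : ∀ x ∈ Ici (0 : ℝ), HasDerivWithinAt u (u' x) (Ici 0) x)
    (hTd : ∀ x ∈ Ici (0 : ℝ), HasDerivWithinAt T (T' x) (Ici 0) x)
    (hφd : ∀ x ∈ Ici (0 : ℝ), HasDerivWithinAt φ (φd x) (Ici 0) x)
    (hpd : ∀ x ∈ Ici (0 : ℝ),
      HasDerivWithinAt (fun y => R * T y * n y) (p' x) (Ici 0) x)
    (hnpos : ∀ x ∈ Ici (0 : ℝ), 0 < n x)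
    (hTpos : ∀ x ∈ Ici (0 : ℝ), 0 < T x)
    (hmass : ∀ x ∈ Ici (0 : ℝ), n' x * u x + n x * u' x = 0)
    (htemp : ∀ x ∈ Ici (0 : ℝ), u x * T' x + (γ - 1) * T x * u' x = 0)
    (hmom : ∀ x ∈ Ici (0 : ℝ), m * n x * u x * u' x + p' x = n x * φd x)
    (hnlim : Tendsto n atTop (nhds 1))
    (hulim : Tendsto u atTop (nhds uinf))
    (hTlim : Tendsto T atTop (nhds Tinf))
    (hφlim : Tendsto φ atTop (nhds 0))
    (hpoisson : ∀ x ∈ Ici (0 : ℝ),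
      HasDerivWithinAt φd (n x - Real.exp (-φ x)) (Ici 0) x)
    (hrange : ∀ x ∈ Ici (0 : ℝ), n x ∈ Ioc 0 cinf) :
    ∀ x ∈ Ici (0 : ℝ),
      HasDerivWithinAt φd (g (φ x) - Real.exp (-φ x)) (Ici 0) x := by
  have h1 := const_of_deriv_zero (fun x => n x * u x) uinf
    (fun x hx => by
      have h := (hn x hx).mul (hud x hx)
      rw [hmass x hx] at h
      exact h)
    (by simpa using hnlim.mul hulim)
  have hune : ∀ x ∈ Ici (0 : ℝ), u x ≠ 0 := by
    intro x hx h0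
    have h := h1 x hx
    simp only [h0, mul_zero] at h
    linarith
  have hTn : ∀ x ∈ Ici (0 : ℝ), T' x * n x = (γ - 1) * T x * n' x := by
    intro x hx
    apply mul_left_cancel₀ (hune x hx)
    linear_combination n x * htemp x hx - (γ - 1) * T x * hmass x hx
  have h2 := const_of_deriv_zero (fun x => T x * n x ^ (1 - γ)) Tinf
    (fun x hx => by
      have hnx := hnpos x hx
      have h := (hTd x hx).mul ((hn x hx).rpow_const (p := 1 - γ) (Or.inl hnx.ne'))
      refine HasDerivWithinAt.congr_deriv h ?_
      symm
      have e : n x ^ (1 - γ) = n x ^ (1 - γ - 1) * n x := by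
        rw [← Real.rpow_add_one hnx.ne']; congr 1; ring
      rw [e]
      linear_combination (- n x ^ (1 - γ - 1)) * hTn x hx)
    (by simpa using hTlim.mul (hnlim.rpow_const (p := 1 - γ) (Or.inl one_ne_zero)))
  have hg1 : γ - 1 ≠ 0 := by linarith
  have h3 := const_of_deriv_zero
    (fun x => φ x - m / 2 * (u x * u x) - γ * R / (γ - 1) * T x)
    (0 - m / 2 * (uinf * uinf) - γ * R / (γ - 1) * Tinf)
    (fun x hx => by
      have hnx := hnpos x hx
      have hp : p' x = R * T' x * n x + R * T x * n' x :=
        (uniqueDiffOn_Ici (0 : ℝ) x hx).eq_deriv _ (hpd x hx)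
          (((hTd x hx).const_mul R).mul (hn x hx))
      have h := ((hφd x hx).sub (((hud x hx).mul (hud x hx)).const_mul (m / 2))).sub
        ((hTd x hx).const_mul (γ * R / (γ - 1)))
      refine HasDerivWithinAt.congr_deriv h ?_
      symm
      apply mul_left_cancel₀ hnx.ne'
      have hm1 := hmom x hx
      rw [hp] at hm1
      have ht := hTn x hx
      field_simp
      apply mul_left_cancel₀ hnx.ne'
      linear_combination 2 * ((γ - 1) * hm1 + R * ht))
    ((hφlim.sub ((hulim.mul hulim).const_mul _)).sub (hTlim.const_mul _))
  intro x hx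
  have hnx := hnpos x hx
  have key : φ x = f (n x) := by
    have a := h1 x hx
    have b := h2 x hx
    have c := h3 x hx
    have hb : T x = Tinf * n x ^ (γ - 1) := by
      rw [← b, mul_assoc, ← Real.rpow_add hnx]
      simp
    have ha : u x * u x = uinf ^ 2 * n x ^ (-2 : ℝ) := by
      have : n x ^ (-2 : ℝ) = (n x ^ 2)⁻¹ := by
        rw [Real.rpow_neg hnx.le]; norm_num
      rw [this, ← a]
      field_simp
    rw [ha, hb] at c
    rw [hf]
    linear_combination c
  rw [key, hg _ (hrange x hx), ← key]
  exact hpoisson x hx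
end

section
/- Let h : ℝ → ℝ be continuous and let H : ℝ → ℝ be differentiable with H' = h and H(0) = 0. Suppose w : [0,∞) → ℝ is twice differentiable, w''(x) = h(w(x)) for all x ≥ 0, and w(x) → 0 and w'(x) → 0 as x → ∞. Then (1/2)w'(x)² = H(w(x)) for every x ≥ 0; in particular H(w(0)) ≥ 0. (Applied with h(η) = g(η) − e^{−η} and H = V the Sagdeev potential, this gives the necessity of the condition V(φ_b) ≥ 0 for the existence of the stationary sheath solution with boundary value φ̃(0) = φ_b.) -/
open Real Set Filter

/-- First integral of the autonomous equation `w'' = h(w)` on `[0,∞)` with `w, w' → 0`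
at infinity: `(1/2)w'(x)² = H(w(x))` for every `x ≥ 0`, where `H` is the
antiderivative of `h` with `H(0) = 0`; in particular `H(w(0)) ≥ 0`.  (Applied with
`h(η) = g(η) − e^{−η}` and `H = V` the Sagdeev potential, this gives the necessity of
`V(φ_b) ≥ 0` for the stationary sheath with boundary value `φ̃(0) = φ_b`.) -/
theorem first_integral_necessity
    (h H w w' : ℝ → ℝ)
    (hcont : Continuous h)
    (hH : ∀ x : ℝ, HasDerivAt H (h x) x)
    (hH0 : H 0 = 0)
    (hw : ∀ x ∈ Ici (0 : ℝ), HasDerivWithinAt w (w' x) (Ici 0) x)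
    (hw' : ∀ x ∈ Ici (0 : ℝ), HasDerivWithinAt w' (h (w x)) (Ici 0) x)
    (hwlim : Tendsto w atTop (nhds 0))
    (hw'lim : Tendsto w' atTop (nhds 0)) :
    (∀ x ∈ Ici (0 : ℝ), (1 / 2) * (w' x) ^ 2 = H (w x)) ∧ 0 ≤ H (w 0) := by
  have hE : ∀ x ∈ Ici (0 : ℝ),
      HasDerivWithinAt (fun y => (1 / 2) * (w' y) ^ 2 - H (w y)) 0 (Ici 0) x := by
    intro x hx
    have h1 := ((hw' x hx).pow 2).const_mul (1 / 2 : ℝ)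
    have h2 := (hH (w x)).comp_hasDerivWithinAt x (hw x hx)
    refine (h1.sub h2).congr_deriv ?_
    norm_num
    ring
  have hconst : ∀ x ∈ Ici (0 : ℝ), ∀ y ∈ Ici (0 : ℝ),
      (1 / 2) * (w' y) ^ 2 - H (w y) = (1 / 2) * (w' x) ^ 2 - H (w x) := by
    intro x hx y hy
    have := (convex_Ici (0 : ℝ)).norm_image_sub_le_of_norm_hasDerivWithin_le (C := 0)
      hE (by simp) hx hy
    rw [zero_mul] at this
    exact sub_eq_zero.mp (norm_le_zero_iff.mp this)
  have hlim : Tendsto (fun y => (1 / 2) * (w' y) ^ 2 - H (w y)) atTop (nhds 0) := by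
    have h1 := (hw'lim.pow 2).const_mul (1 / 2 : ℝ)
    have h2 := (hH 0).continuousAt.tendsto.comp hwlim
    have h3 := h1.sub h2
    simpa [hH0] using h3
  have key : ∀ x ∈ Ici (0 : ℝ), (1 / 2) * (w' x) ^ 2 = H (w x) := by
    intro x hx
    have h1 : Tendsto (fun y => (1 / 2) * (w' y) ^ 2 - H (w y)) atTop
        (nhds ((1 / 2) * (w' x) ^ 2 - H (w x))) := by
      refine tendsto_const_nhds.congr' ?_
      filter_upwards [eventually_ge_atTop (0 : ℝ)] with y hy
      exact (hconst x hx y hy).symm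
    exact sub_eq_zero.mp (tendsto_nhds_unique h1 hlim)
  refine ⟨key, ?_⟩
  rw [← key 0 (by simp)]
  positivity
end

section
/- Let γ > 1, R > 0, T∞ > 0, m > 0 and u∞ < 0 with m u∞² = γRT∞ + 1 (the degenerate Bohm criterion). Then for all real numbers φ, ψ₁, ζ, σ the following identity holds: (RT∞|u∞|/2)φ² − RT∞ φψ₁ + (m|u∞|/2)ψ₁² − Rψ₁ζ + (R|u∞|/(2(γ−1)T∞))ζ² + σψ₁ + (|u∞|/2)σ² = (RT∞|u∞|/2)(φ − ψ₁/|u∞|)² + ((γ−1)RT∞/(2|u∞|))(ψ₁ − |u∞|ζ/((γ−1)T∞))² + (|u∞|/2)(σ + ψ₁/|u∞|)². In particular the left-hand side is nonnegative. -/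
/-- Under the degenerate Bohm relation `m u∞² = γRT∞ + 1` (with `|u∞| = −u∞` since
`u∞ < 0`), the quadratic form arising in the weighted energy estimate of the term `I₉`
is a sum of three squares; in particular it is nonnegative. -/
theorem degenerate_quadratic_identity
    (γ R Tinf m uinf : ℝ) (hγ : 1 < γ) (hR : 0 < R) (hT : 0 < Tinf) (hm : 0 < m)
    (hu : uinf < 0) (hdeg : m * uinf ^ 2 = γ * R * Tinf + 1) :
    ∀ φ ψ₁ ζ σ : ℝ,
      ((R * Tinf * (-uinf) / 2) * φ ^ 2 - R * Tinf * φ * ψ₁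
          + (m * (-uinf) / 2) * ψ₁ ^ 2 - R * ψ₁ * ζ
          + (R * (-uinf) / (2 * (γ - 1) * Tinf)) * ζ ^ 2
          + σ * ψ₁ + ((-uinf) / 2) * σ ^ 2
        = (R * Tinf * (-uinf) / 2) * (φ - ψ₁ / (-uinf)) ^ 2
          + ((γ - 1) * R * Tinf / (2 * (-uinf))) *
              (ψ₁ - (-uinf) * ζ / ((γ - 1) * Tinf)) ^ 2
          + ((-uinf) / 2) * (σ + ψ₁ / (-uinf)) ^ 2) ∧
      0 ≤ (R * Tinf * (-uinf) / 2) * φ ^ 2 - R * Tinf * φ * ψ₁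
          + (m * (-uinf) / 2) * ψ₁ ^ 2 - R * ψ₁ * ζ
          + (R * (-uinf) / (2 * (γ - 1) * Tinf)) * ζ ^ 2
          + σ * ψ₁ + ((-uinf) / 2) * σ ^ 2 := by
  intro φ ψ₁ ζ σ
  obtain ⟨v, rfl⟩ : ∃ v, uinf = -v := ⟨-uinf, by ring⟩
  obtain ⟨g, rfl⟩ : ∃ g, γ = g + 1 := ⟨γ - 1, by ring⟩
  have hv : 0 < v := by linarith
  have hg : 0 < g := by linarith
  have hmv : m = ((g + 1) * R * Tinf + 1) / v ^ 2 := by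
    rw [eq_div_iff (by positivity)]
    linarith [neg_sq v ▸ hdeg]
  simp only [neg_neg, add_sub_cancel_right]
  refine and_iff_left_of_imp (fun h => ?_) |>.mpr ?_
  · rw [h]
    positivity
  · rw [hmv]
    field_simp
    ring
end

section
/- Let γ > 1, R > 0, T∞ > 0, m > 0 and u∞ < 0 with m u∞² > γRT∞ + 1 (the nondegenerate Bohm criterion). Then there exists a constant c > 0 such that for all real φ, ψ₁, ζ: (RT∞|u∞|/2)φ² − RT∞ φψ₁ + ((m u∞² − 1)/(2|u∞|))ψ₁² − Rψ₁ζ + (R|u∞|/(2(γ−1)T∞))ζ² ≥ c(φ² + ψ₁² + ζ²). -/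
theorem aux_form (a b d p q : ℝ) (ha : 0 < a) (hb : 0 < b) (hd : 0 < d) :
    ∃ c > 0, ∀ x y z : ℝ, c * (x ^ 2 + y ^ 2 + z ^ 2) ≤
      a * (x - p * y) ^ 2 + b * (z - q * y) ^ 2 + d * y ^ 2 := by
  have hK : 0 < 1 + 2 * p ^ 2 + 2 * q ^ 2 := by positivity
  obtain ⟨c, hc, h1, h2, h3⟩ : ∃ c > 0, c ≤ a / 2 ∧ c ≤ b / 2 ∧
      c ≤ d / (1 + 2 * p ^ 2 + 2 * q ^ 2) :=
    ⟨min (a / 2) (min (b / 2) (d / (1 + 2 * p ^ 2 + 2 * q ^ 2))), by positivity,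
      min_le_left _ _, (min_le_right _ _).trans (min_le_left _ _),
      (min_le_right _ _).trans (min_le_right _ _)⟩
  rw [le_div_iff₀ hK] at h3
  refine ⟨c, hc, fun x y z => ?_⟩
  have e1 := mul_le_mul_of_nonneg_right h1 (sq_nonneg (x - p * y))
  have e2 := mul_le_mul_of_nonneg_right h2 (sq_nonneg (z - q * y))
  have e3 := mul_le_mul_of_nonneg_right h3 (sq_nonneg y)
  have e4 := mul_nonneg hc.le (sq_nonneg (x - 2 * p * y))
  have e5 := mul_nonneg hc.le (sq_nonneg (z - 2 * q * y))
  linarith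

/-- Under the nondegenerate Bohm criterion `m u∞² > γRT∞ + 1` (with `|u∞| = −u∞`),
the quadratic form arising in the weighted energy estimate of the term `I₁` is
positive definite: there is `c > 0` with
`(RT∞|u∞|/2)φ² − RT∞φψ₁ + ((mu∞²−1)/(2|u∞|))ψ₁² − Rψ₁ζ + (R|u∞|/(2(γ−1)T∞))ζ²
  ≥ c(φ² + ψ₁² + ζ²)`. -/
theorem nondegenerate_quadratic_positive
    (γ R Tinf m uinf : ℝ) (hγ : 1 < γ) (hR : 0 < R) (hT : 0 < Tinf) (hm : 0 < m)
    (hu : uinf < 0) (hBohm : γ * R * Tinf + 1 < m * uinf ^ 2) :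
    ∃ c > 0, ∀ φ ψ₁ ζ : ℝ,
      c * (φ ^ 2 + ψ₁ ^ 2 + ζ ^ 2) ≤
        (R * Tinf * (-uinf) / 2) * φ ^ 2 - R * Tinf * φ * ψ₁
          + ((m * uinf ^ 2 - 1) / (2 * (-uinf))) * ψ₁ ^ 2 - R * ψ₁ * ζ
          + (R * (-uinf) / (2 * (γ - 1) * Tinf)) * ζ ^ 2 := by
  obtain ⟨v, rfl⟩ : ∃ v, uinf = -v := ⟨-uinf, by ring⟩
  have hv : 0 < v := by linarith
  have hg : 0 < γ - 1 := by linarith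
  have hd : 0 < (m * (-v) ^ 2 - 1 - γ * R * Tinf) / (2 * v) :=
    div_pos (by linarith) (by positivity)
  obtain ⟨c, hc, h⟩ := aux_form (R * Tinf * v / 2) (R * v / (2 * (γ - 1) * Tinf)) _
    (1 / v) ((γ - 1) * Tinf / v) (by positivity) (by positivity) hd
  refine ⟨c, hc, fun x y z => (h x y z).trans_eq ?_⟩
  rw [neg_neg]
  field_simp
  ring
end

section
/- Let γ > 1, R > 0, T∞ > 0, m > 0 and u∞ < 0 with m u∞² > γRT∞. Then there exists a constant c > 0 such that for all real a, b, d: (RT∞|u∞|/2)a² − RT∞ ab + (m|u∞|/2)b² − R b d + (R|u∞|/(2(γ−1)T∞))d² ≥ c(a² + b² + d²). -/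
theorem flux_aux (A D E p q : ℝ) (hA : 0 < A) (hD : 0 < D) (hE : 0 < E) :
    ∃ c > 0, ∀ a b d : ℝ, c * (a ^ 2 + b ^ 2 + d ^ 2) ≤
      A * (a - p * b) ^ 2 + D * (d - q * b) ^ 2 + E * b ^ 2 := by
  obtain ⟨μ, hμ, h1, h2, h3⟩ : ∃ μ : ℝ, 0 < μ ∧ μ ≤ A ∧ μ ≤ D ∧ μ ≤ E :=
    ⟨min A (min D E), by positivity, min_le_left _ _,
      (min_le_right _ _).trans (min_le_left _ _), (min_le_right _ _).trans (min_le_right _ _)⟩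
  have hK : 0 < 2 + 2 * p ^ 2 + 2 * q ^ 2 := by positivity
  refine ⟨μ / (2 + 2 * p ^ 2 + 2 * q ^ 2), by positivity, fun a b d => ?_⟩
  have key : a ^ 2 + b ^ 2 + d ^ 2 ≤ (2 + 2 * p ^ 2 + 2 * q ^ 2) *
      ((a - p * b) ^ 2 + (d - q * b) ^ 2 + b ^ 2) := by
    obtain ⟨x, rfl⟩ : ∃ x, a = x + p * b := ⟨a - p * b, by ring⟩
    obtain ⟨y, rfl⟩ : ∃ y, d = y + q * b := ⟨d - q * b, by ring⟩
    nlinarith [sq_nonneg (x - p * b), sq_nonneg (y - q * b), sq_nonneg b, sq_nonneg (p * x),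
      sq_nonneg (p * y), sq_nonneg (q * x), sq_nonneg (q * y)]
  have e1 := mul_le_mul_of_nonneg_right h1 (sq_nonneg (a - p * b))
  have e2 := mul_le_mul_of_nonneg_right h2 (sq_nonneg (d - q * b))
  have e3 := mul_le_mul_of_nonneg_right h3 (sq_nonneg b)
  calc _ ≤ μ / (2 + 2 * p ^ 2 + 2 * q ^ 2) * ((2 + 2 * p ^ 2 + 2 * q ^ 2) *
      ((a - p * b) ^ 2 + (d - q * b) ^ 2 + b ^ 2)) :=
        mul_le_mul_of_nonneg_left key (by positivity)
    _ = μ * ((a - p * b) ^ 2 + (d - q * b) ^ 2 + b ^ 2) := by field_simp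
    _ ≤ _ := by linarith

/-- Under `m u∞² > γRT∞` (with `|u∞| = −u∞`), the leading quadratic form of the flux
term `(−H̃₁)₁/ñ` is positive definite: there is `c > 0` with
`(RT∞|u∞|/2)a² − RT∞ab + (m|u∞|/2)b² − Rbd + (R|u∞|/(2(γ−1)T∞))d² ≥ c(a²+b²+d²)`. -/
theorem flux_quadratic_positive
    (γ R Tinf m uinf : ℝ) (hγ : 1 < γ) (hR : 0 < R) (hT : 0 < Tinf) (hm : 0 < m)
    (hu : uinf < 0) (hsup : γ * R * Tinf < m * uinf ^ 2) :
    ∃ c > 0, ∀ a b d : ℝ,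
      c * (a ^ 2 + b ^ 2 + d ^ 2) ≤
        (R * Tinf * (-uinf) / 2) * a ^ 2 - R * Tinf * a * b
          + (m * (-uinf) / 2) * b ^ 2 - R * b * d
          + (R * (-uinf) / (2 * (γ - 1) * Tinf)) * d ^ 2 := by
  obtain ⟨u, rfl⟩ : ∃ u, uinf = -u := ⟨-uinf, by ring⟩
  obtain ⟨g, rfl⟩ : ∃ g, γ = g + 1 := ⟨γ - 1, by ring⟩
  have hu' : 0 < u := by linarith
  have hg : 0 < g := by linarith
  have hE : 0 < (m * u ^ 2 - (g + 1) * R * Tinf) / (2 * u) := by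
    apply div_pos _ (by positivity)
    nlinarith
  obtain ⟨c, hc, h⟩ := flux_aux (R * Tinf * u / 2) (R * u / (2 * g * Tinf)) _ (1 / u)
    (g * Tinf / u) (by positivity) (by positivity) hE
  refine ⟨c, hc, fun a b d => (h a b d).trans (le_of_eq ?_)⟩
  rw [neg_neg, add_sub_cancel_right]
  field_simp
  ring
end

section
/- There exists δ > 0, depending only on γ, R, T∞, θ and ε, such that whenever φ_b ∈ (0, δ], the coefficient functions satisfy, for every x₁ ≥ 0: q₁(x₁) > 0, q₃(x₁) > 0, q₄(x₁) > 0, q₂(x₁)² − 4q₁(x₁)q₃(x₁) < 0, and q₅(x₁)² − 4q₃(x₁)q₄(x₁) < 0. -/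
noncomputable def Bfun (β x : ℝ) : ℝ := x + β⁻¹

noncomputable def Sfun (β Γ φb x : ℝ) : ℝ :=
  (x + β⁻¹) / (x + Γ⁻¹ * (Real.sqrt φb)⁻¹)

noncomputable def q1 (γ R T Γ ε β φb x : ℝ) : ℝ :=
  (ε / 2) * R * T +
    (((1 - R * T) * ε / 2) * (Sfun β Γ φb x) ^ 2
      - (Γ ^ 2 / 2) * ε * (ε - 1) * (ε - 2)
      + (γ * R * T - 1) * (Sfun β Γ φb x) ^ 3) / ((Bfun β x) ^ 2 * Γ ^ 2)

noncomputable def q2 (γ R T Γ ε β φb x : ℝ) : ℝ :=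
  -(R * T * ε) +
    (2 * ε * R * T * (Sfun β Γ φb x) ^ 2
      + 2 * (1 - γ * R * T) * (Sfun β Γ φb x) ^ 3) / ((Bfun β x) ^ 2 * Γ ^ 2)

noncomputable def q3 (γ R T Γ ε β φb x : ℝ) : ℝ :=
  (ε / 2) * γ * R * T +
    (((1 - R * T) * ε / 2) * (Sfun β Γ φb x) ^ 2
      + (3 * γ * R * T + 3) * (Sfun β Γ φb x) ^ 3) / ((Bfun β x) ^ 2 * Γ ^ 2)

noncomputable def q4 (γ R T Γ ε β φb x : ℝ) : ℝ :=
  ε * R / (2 * (γ - 1) * T) +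
    (-(ε * R / (2 * (γ - 1) * T)) * (Sfun β Γ φb x) ^ 2
      + (γ * R / ((γ - 1) * T)) * (Sfun β Γ φb x) ^ 3) / ((Bfun β x) ^ 2 * Γ ^ 2)

noncomputable def q5 (γ R T Γ ε β φb x : ℝ) : ℝ :=
  -(ε * R) + 2 * ε * R * (Sfun β Γ φb x) ^ 2 / ((Bfun β x) ^ 2 * Γ ^ 2)

/-- Positivity and discriminant conditions (paper eqs. (44)–(45)) for the coefficient
functions `q₁,…,q₅` of the degenerate-case quadratic form, valid for all `x₁ ≥ 0`
once the boundary datum `φ_b` is small enough. -/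
theorem degenerate_coefficients_signs
    (γ R T Γ l₀ ε θ : ℝ)
    (hγ : 1 < γ) (hR : 0 < R) (hT : 0 < T)
    (hΓ : Γ = Real.sqrt (((γ ^ 2 + γ) * R * T + 2) / 12))
    (hl₀ : 4 < l₀)
    (hl₀root : l₀ * (l₀ - 1) * (l₀ - 2) - 12 * (2 * l₀ / (1 + γ) + 2) = 0)
    (hε4 : 4 ≤ ε) (hεl : ε < l₀)
    (hθ : 0 < θ) (hθ1 : θ ≤ 1) :
    ∃ δ > 0, ∀ φb β : ℝ, 0 < φb → φb ≤ δ → 0 < β →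
      θ ≤ β / (Γ * Real.sqrt φb) → β / (Γ * Real.sqrt φb) ≤ 1 →
      ∀ x : ℝ, 0 ≤ x →
        0 < q1 γ R T Γ ε β φb x ∧
        0 < q3 γ R T Γ ε β φb x ∧
        0 < q4 γ R T Γ ε β φb x ∧
        (q2 γ R T Γ ε β φb x) ^ 2
            - 4 * q1 γ R T Γ ε β φb x * q3 γ R T Γ ε β φb x < 0 ∧
        (q5 γ R T Γ ε β φb x) ^ 2
            - 4 * q3 γ R T Γ ε β φb x * q4 γ R T Γ ε β φb x < 0 := by
  have hΓ0 : 0 < Γ := by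
    rw [hΓ]; apply Real.sqrt_pos.mpr
    have : 0 < (γ ^ 2 + γ) * R * T := by positivity
    linarith
  have hε : 0 < ε := by linarith
  have hg : 0 < γ - 1 := by linarith
  -- the coefficients as functions of `t = 1 / (B ^ 2 Γ ^ 2)` and `s = S`
  let Q1 : ℝ → ℝ → ℝ := fun t s => (ε / 2) * R * T +
    (((1 - R * T) * ε / 2) * s ^ 2 - (Γ ^ 2 / 2) * ε * (ε - 1) * (ε - 2)
      + (γ * R * T - 1) * s ^ 3) * t
  let Q2 : ℝ → ℝ → ℝ := fun t s => -(R * T * ε) +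
    (2 * ε * R * T * s ^ 2 + 2 * (1 - γ * R * T) * s ^ 3) * t
  let Q3 : ℝ → ℝ → ℝ := fun t s => (ε / 2) * γ * R * T +
    (((1 - R * T) * ε / 2) * s ^ 2 + (3 * γ * R * T + 3) * s ^ 3) * t
  let Q4 : ℝ → ℝ → ℝ := fun t s => ε * R / (2 * (γ - 1) * T) +
    (-(ε * R / (2 * (γ - 1) * T)) * s ^ 2 + (γ * R / ((γ - 1) * T)) * s ^ 3) * t
  let Q5 : ℝ → ℝ → ℝ := fun t s => -(ε * R) + 2 * ε * R * s ^ 2 * t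
  have key : ∀ᶠ t in nhds (0 : ℝ), ∀ s ∈ Set.Icc (1 : ℝ) θ⁻¹,
      0 < Q1 t s ∧ 0 < Q3 t s ∧ 0 < Q4 t s ∧
      (Q2 t s) ^ 2 - 4 * Q1 t s * Q3 t s < 0 ∧
      (Q5 t s) ^ 2 - 4 * Q3 t s * Q4 t s < 0 := by
    apply isCompact_Icc.eventually_forall_of_forall_eventually
    intro s _
    have h1 : 0 < Q1 0 s := by simp only [Q1, mul_zero, add_zero]; positivity
    have h3 : 0 < Q3 0 s := by simp only [Q3, mul_zero, add_zero]; positivity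
    have h4 : 0 < Q4 0 s := by simp only [Q4, mul_zero, add_zero]; positivity
    have h2 : (Q2 0 s) ^ 2 - 4 * Q1 0 s * Q3 0 s < 0 := by
      have e : (Q2 0 s) ^ 2 - 4 * Q1 0 s * Q3 0 s = -((γ - 1) * (R * T * ε) ^ 2) := by
        simp only [Q1, Q2, Q3]; ring
      rw [e]; have : 0 < (γ - 1) * (R * T * ε) ^ 2 := by positivity
      linarith
    have h5 : (Q5 0 s) ^ 2 - 4 * Q3 0 s * Q4 0 s < 0 := by
      have e : (Q5 0 s) ^ 2 - 4 * Q3 0 s * Q4 0 s = -((R * ε) ^ 2 / (γ - 1)) := by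
        simp only [Q5, Q3, Q4, mul_zero, add_zero]; field_simp; ring
      rw [e]; have : 0 < (R * ε) ^ 2 / (γ - 1) := by positivity
      linarith
    have c1 : Continuous fun z : ℝ × ℝ => Q1 z.1 z.2 := by simp only [Q1]; fun_prop
    have c2 : Continuous fun z : ℝ × ℝ => Q2 z.1 z.2 := by simp only [Q2]; fun_prop
    have c3 : Continuous fun z : ℝ × ℝ => Q3 z.1 z.2 := by simp only [Q3]; fun_prop
    have c4 : Continuous fun z : ℝ × ℝ => Q4 z.1 z.2 := by simp only [Q4]; fun_prop
    have c5 : Continuous fun z : ℝ × ℝ => Q5 z.1 z.2 := by simp only [Q5]; fun_prop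
    clear_value Q1 Q2 Q3 Q4 Q5
    have d2 : Continuous fun z : ℝ × ℝ => (Q2 z.1 z.2) ^ 2 - 4 * Q1 z.1 z.2 * Q3 z.1 z.2 :=
      (c2.pow 2).sub ((c1.const_mul 4).mul c3)
    have d5 : Continuous fun z : ℝ × ℝ => (Q5 z.1 z.2) ^ 2 - 4 * Q3 z.1 z.2 * Q4 z.1 z.2 :=
      (c5.pow 2).sub ((c3.const_mul 4).mul c4)
    have e1 : ∀ᶠ z : ℝ × ℝ in nhds ((0 : ℝ), s), 0 < Q1 z.1 z.2 :=
      (isOpen_lt continuous_const c1).mem_nhds h1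
    have e3 : ∀ᶠ z : ℝ × ℝ in nhds ((0 : ℝ), s), 0 < Q3 z.1 z.2 :=
      (isOpen_lt continuous_const c3).mem_nhds h3
    have e4 : ∀ᶠ z : ℝ × ℝ in nhds ((0 : ℝ), s), 0 < Q4 z.1 z.2 :=
      (isOpen_lt continuous_const c4).mem_nhds h4
    have e2 : ∀ᶠ z : ℝ × ℝ in nhds ((0 : ℝ), s), (Q2 z.1 z.2) ^ 2 - 4 * Q1 z.1 z.2 * Q3 z.1 z.2 < 0 :=
      (isOpen_lt d2 continuous_const).mem_nhds h2
    have e5 : ∀ᶠ z : ℝ × ℝ in nhds ((0 : ℝ), s), (Q5 z.1 z.2) ^ 2 - 4 * Q3 z.1 z.2 * Q4 z.1 z.2 < 0 :=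
      (isOpen_lt d5 continuous_const).mem_nhds h5
    filter_upwards [e1, e3, e4, e2, e5] with z g1 g3 g4 g2 g5
    exact ⟨g1, g3, g4, g2, g5⟩
  obtain ⟨η, hη, hkey⟩ := Metric.eventually_nhds_iff.mp key
  refine ⟨η / 2, by positivity, ?_⟩
  intro φb β hφ hφδ hβ hβ1 hβ2 x hx
  have hsq : 0 < Real.sqrt φb := Real.sqrt_pos.mpr hφ
  have hm : 0 < Γ * Real.sqrt φb := by positivity
  rw [le_div_iff₀ hm] at hβ1
  rw [div_le_one hm] at hβ2
  have hinv : (Γ * Real.sqrt φb)⁻¹ ≤ β⁻¹ := inv_anti₀ hβ hβ2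
  have hinv' : β⁻¹ ≤ θ⁻¹ * (Γ * Real.sqrt φb)⁻¹ := by
    rw [← mul_inv]; exact inv_anti₀ (by positivity) hβ1
  have hm' : 0 < (Γ * Real.sqrt φb)⁻¹ := by positivity
  have hθi : 1 ≤ θ⁻¹ := (one_le_inv₀ hθ).mpr hθ1
  have hS : Sfun β Γ φb x ∈ Set.Icc (1 : ℝ) θ⁻¹ := by
    unfold Sfun
    rw [← mul_inv]
    constructor
    · rw [le_div_iff₀ (by positivity)]; linarith
    · rw [div_le_iff₀ (by positivity)]; nlinarith
  have hB : (Γ * Real.sqrt φb)⁻¹ ≤ Bfun β x := by unfold Bfun; linarith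
  have hB0 : 0 < Bfun β x := lt_of_lt_of_le hm' hB
  have ht : ((Bfun β x) ^ 2 * Γ ^ 2)⁻¹ ≤ φb := by
    rw [inv_le_comm₀ (by positivity) hφ]
    have h1 : ((Γ * Real.sqrt φb)⁻¹) ^ 2 ≤ Bfun β x ^ 2 := by gcongr
    have h2 : ((Γ * Real.sqrt φb)⁻¹) ^ 2 * Γ ^ 2 = φb⁻¹ := by
      rw [inv_pow, mul_pow, Real.sq_sqrt hφ.le]; field_simp
    rw [← h2]; gcongr
  have ht0 : 0 < ((Bfun β x) ^ 2 * Γ ^ 2)⁻¹ := by positivity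
  have := hkey (y := ((Bfun β x) ^ 2 * Γ ^ 2)⁻¹)
    (by rw [Real.dist_eq, sub_zero, abs_of_pos ht0]; linarith) _ hS
  simpa only [q1, q2, q3, q4, q5, div_eq_mul_inv _ ((Bfun β x) ^ 2 * Γ ^ 2)] using this
end

section
/- There exist δ > 0 and c > 0, depending only on γ, R, T∞, θ and ε, such that whenever φ_b ∈ (0, δ], the coefficient functions satisfy, for every x₁ ≥ 0: q₁(x₁)q₅(x₁)² + q₄(x₁)q₂(x₁)² − 4q₁(x₁)q₃(x₁)q₄(x₁) ≤ −c B(x₁)^{−2}. -/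
theorem aux_expand (a1 a2 a3 a4 a5 b1 b2 b3 b4 b5 t : ℝ) :
    (a1 + b1 * t) * (a5 + b5 * t) ^ 2 + (a4 + b4 * t) * (a2 + b2 * t) ^ 2
      - 4 * (a1 + b1 * t) * (a3 + b3 * t) * (a4 + b4 * t)
    = (a1 * a5 ^ 2 + a4 * a2 ^ 2 - 4 * a1 * a3 * a4)
      + t * (b1 * (a5 ^ 2 - 4 * a3 * a4) + 2 * a1 * a5 * b5 + b4 * (a2 ^ 2 - 4 * a1 * a3)
        + 2 * a4 * a2 * b2 - 4 * a1 * a4 * b3)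
      + t ^ 2 * (a1 * b5 ^ 2 + 2 * b1 * a5 * b5 + t * b1 * b5 ^ 2 + a4 * b2 ^ 2
        + 2 * b4 * a2 * b2 + t * b4 * b2 ^ 2
        - 4 * (a1 * b3 * b4 + b1 * a3 * b4 + b1 * b3 * a4 + t * b1 * b3 * b4)) := by
  ring

/-- A form of the discriminant as a function of `s = S` and `t = 1/(B²Γ²)`. -/
theorem aux_bound (γ R T Γ ε θ : ℝ) (hγ : 1 < γ) (hT : 0 < T) :
    ∃ M > 0, ∀ s t : ℝ, 1 ≤ s → s ≤ θ⁻¹ → 0 ≤ t → t ≤ 1 →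
      ((ε / 2) * R * T + (((1 - R * T) * ε / 2) * s ^ 2
        - (Γ ^ 2 / 2) * ε * (ε - 1) * (ε - 2) + (γ * R * T - 1) * s ^ 3) * t)
        * (-(ε * R) + 2 * ε * R * s ^ 2 * t) ^ 2
      + (ε * R / (2 * (γ - 1) * T) + (-(ε * R / (2 * (γ - 1) * T)) * s ^ 2
        + (γ * R / ((γ - 1) * T)) * s ^ 3) * t)
        * (-(R * T * ε) + (2 * ε * R * T * s ^ 2 + 2 * (1 - γ * R * T) * s ^ 3) * t) ^ 2
      - 4 * ((ε / 2) * R * T + (((1 - R * T) * ε / 2) * s ^ 2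
        - (Γ ^ 2 / 2) * ε * (ε - 1) * (ε - 2) + (γ * R * T - 1) * s ^ 3) * t)
        * ((ε / 2) * γ * R * T + (((1 - R * T) * ε / 2) * s ^ 2
          + (3 * γ * R * T + 3) * s ^ 3) * t)
        * (ε * R / (2 * (γ - 1) * T) + (-(ε * R / (2 * (γ - 1) * T)) * s ^ 2
        + (γ * R / ((γ - 1) * T)) * s ^ 3) * t)
      ≤ -(ε ^ 2 * R ^ 2 / (γ - 1)) * (ε * (1 + R * T + 3 / 2 * (γ - 1) * (R * T)) * s ^ 2
          + (4 + γ * (γ + 1) * (R * T)) * s ^ 3 - Γ ^ 2 / 2 * (ε * (ε - 1) * (ε - 2))) * t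
        + M * t ^ 2 := by
  have hg : γ - 1 ≠ 0 := by linarith
  let b1 : ℝ → ℝ := fun s => ((1 - R * T) * ε / 2) * s ^ 2
        - (Γ ^ 2 / 2) * ε * (ε - 1) * (ε - 2) + (γ * R * T - 1) * s ^ 3
  let b2 : ℝ → ℝ := fun s => 2 * ε * R * T * s ^ 2 + 2 * (1 - γ * R * T) * s ^ 3
  let b3 : ℝ → ℝ := fun s => ((1 - R * T) * ε / 2) * s ^ 2 + (3 * γ * R * T + 3) * s ^ 3
  let b4 : ℝ → ℝ := fun s => -(ε * R / (2 * (γ - 1) * T)) * s ^ 2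
        + (γ * R / ((γ - 1) * T)) * s ^ 3
  let b5 : ℝ → ℝ := fun s => 2 * ε * R * s ^ 2
  let a1 := (ε / 2) * R * T
  let a2 := -(R * T * ε)
  let a3 := (ε / 2) * γ * R * T
  let a4 := ε * R / (2 * (γ - 1) * T)
  let a5 := -(ε * R)
  let G : ℝ × ℝ → ℝ := fun p =>
    a1 * b5 p.1 ^ 2 + 2 * b1 p.1 * a5 * b5 p.1 + p.2 * b1 p.1 * b5 p.1 ^ 2 + a4 * b2 p.1 ^ 2
        + 2 * b4 p.1 * a2 * b2 p.1 + p.2 * b4 p.1 * b2 p.1 ^ 2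
        - 4 * (a1 * b3 p.1 * b4 p.1 + b1 p.1 * a3 * b4 p.1 + b1 p.1 * b3 p.1 * a4
          + p.2 * b1 p.1 * b3 p.1 * b4 p.1)
  have hG : Continuous G := by
    simp only [G, b1, b2, b3, b4, b5]
    fun_prop
  obtain ⟨C, hC⟩ := ((isCompact_Icc (a := (1 : ℝ)) (b := θ⁻¹)).prod
    (isCompact_Icc (a := (0 : ℝ)) (b := 1))).exists_bound_of_continuousOn hG.continuousOn
  refine ⟨|C| + 1, by positivity, fun s t h1 h2 h3 h4 => ?_⟩
  have hb := hC (s, t) ⟨⟨h1, h2⟩, ⟨h3, h4⟩⟩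
  have hb' : G (s, t) ≤ |C| + 1 := by
    have := le_abs_self (G (s, t))
    have := le_abs_self C
    rw [Real.norm_eq_abs] at hb
    linarith
  have key := aux_expand a1 a2 a3 a4 a5 (b1 s) (b2 s) (b3 s) (b4 s) (b5 s) t
  refine (show _ = _ from key).trans_le ?_
  have e0 : a1 * a5 ^ 2 + a4 * a2 ^ 2 - 4 * a1 * a3 * a4 = 0 := by
    simp only [a1, a2, a3, a4, a5]
    field_simp
    ring
  have e1 : b1 s * (a5 ^ 2 - 4 * a3 * a4) + 2 * a1 * a5 * b5 s + b4 s * (a2 ^ 2 - 4 * a1 * a3)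
        + 2 * a4 * a2 * b2 s - 4 * a1 * a4 * b3 s
      = -(ε ^ 2 * R ^ 2 / (γ - 1)) * (ε * (1 + R * T + 3 / 2 * (γ - 1) * (R * T)) * s ^ 2
          + (4 + γ * (γ + 1) * (R * T)) * s ^ 3 - Γ ^ 2 / 2 * (ε * (ε - 1) * (ε - 2))) := by
    simp only [a1, a2, a3, a4, a5, b1, b2, b3, b4, b5]
    field_simp
    ring
  rw [e0, e1]
  have := mul_le_mul_of_nonneg_left hb' (sq_nonneg t)
  simp only [G] at this
  linarith

theorem aux_eps (γ l₀ ε : ℝ) (hγ : 1 < γ) (hl₀ : 4 < l₀)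
    (hl₀root : l₀ * (l₀ - 1) * (l₀ - 2) - 12 * (2 * l₀ / (1 + γ) + 2) = 0)
    (hε4 : 4 ≤ ε) (hεl : ε < l₀) :
    ε * (ε - 1) * (ε - 2) < 12 * (2 * ε / (1 + γ) + 2) := by
  have h0 : (l₀ - 1) * (l₀ - 2) = 24 / (1 + γ) + 24 / l₀ := by
    have : l₀ ≠ 0 := by linarith
    have : 1 + γ ≠ 0 := by linarith
    field_simp
    field_simp at hl₀root
    linarith
  have h1 : 24 / l₀ < 24 / ε := by
    apply div_lt_div_of_pos_left <;> linarith
  have h2 : (ε - 1) * (ε - 2) < (l₀ - 1) * (l₀ - 2) := by nlinarith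
  have h3 : (ε - 1) * (ε - 2) < 24 / (1 + γ) + 24 / ε := by linarith
  have h4 := mul_lt_mul_of_pos_left h3 (show 0 < ε by linarith)
  have h5 : ε * (24 / (1 + γ) + 24 / ε) = 12 * (2 * ε / (1 + γ) + 2) := by
    have : ε ≠ 0 := by linarith
    field_simp
    ring
  linarith

/-- Key negativity estimate (paper eq. (46)): for `φ_b` small, the combination
`q₁q₅² + q₄q₂² − 4q₁q₃q₄` is bounded above by `−c B(x₁)^{−2}` for all `x₁ ≥ 0`. -/
theorem degenerate_coefficients_cubic_discriminant
    (γ R T Γ l₀ ε θ : ℝ)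
    (hγ : 1 < γ) (hR : 0 < R) (hT : 0 < T)
    (hΓ : Γ = Real.sqrt (((γ ^ 2 + γ) * R * T + 2) / 12))
    (hl₀ : 4 < l₀)
    (hl₀root : l₀ * (l₀ - 1) * (l₀ - 2) - 12 * (2 * l₀ / (1 + γ) + 2) = 0)
    (hε4 : 4 ≤ ε) (hεl : ε < l₀)
    (hθ : 0 < θ) (hθ1 : θ ≤ 1) :
    ∃ δ > 0, ∃ c > 0, ∀ φb β : ℝ, 0 < φb → φb ≤ δ → 0 < β →
      θ ≤ β / (Γ * Real.sqrt φb) → β / (Γ * Real.sqrt φb) ≤ 1 →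
      ∀ x : ℝ, 0 ≤ x →
        q1 γ R T Γ ε β φb x * (q5 γ R T Γ ε β φb x) ^ 2
            + q4 γ R T Γ ε β φb x * (q2 γ R T Γ ε β φb x) ^ 2
            - 4 * q1 γ R T Γ ε β φb x * q3 γ R T Γ ε β φb x * q4 γ R T Γ ε β φb x
          ≤ -(c / (Bfun β x) ^ 2) := by
  have hRT : 0 < R * T := mul_pos hR hT
  have hX : 0 < ((γ ^ 2 + γ) * R * T + 2) / 12 := by positivity
  have hΓ2 : Γ ^ 2 = ((γ ^ 2 + γ) * R * T + 2) / 12 := by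
    rw [hΓ, Real.sq_sqrt hX.le]
  have hΓ0 : 0 < Γ := by rw [hΓ]; exact Real.sqrt_pos.mpr hX
  have heps := aux_eps γ l₀ ε hγ hl₀ hl₀root hε4 hεl
  obtain ⟨M, hM, hbound⟩ := aux_bound γ R T Γ ε θ hγ hT
  obtain ⟨L, hLdef⟩ : ∃ L, L = ε * (1 + R * T + 3 / 2 * (γ - 1) * (R * T))
          + (4 + γ * (γ + 1) * (R * T)) - Γ ^ 2 / 2 * (ε * (ε - 1) * (ε - 2)) := ⟨_, rfl⟩
  have hg : 0 < γ - 1 := by linarith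
  have hε : 0 < ε := by linarith
  have hL : 0 < L := by
    have h1 : Γ ^ 2 / 2 * (ε * (ε - 1) * (ε - 2)) <
        Γ ^ 2 / 2 * (12 * (2 * ε / (1 + γ) + 2)) :=
      mul_lt_mul_of_pos_left heps (by positivity)
    have h2 : Γ ^ 2 / 2 * (12 * (2 * ε / (1 + γ) + 2)) =
        γ * (R * T) * ε + 2 * ε / (1 + γ) + (γ ^ 2 + γ) * (R * T) + 2 := by
      rw [hΓ2]
      have : 1 + γ ≠ 0 := by linarith
      field_simp
      ring
    have h3 : 2 * ε / (1 + γ) ≤ ε := by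
      rw [div_le_iff₀ (by linarith)]
      nlinarith
    have h4 : 0 < ε * ((γ - 1) * (R * T)) := by positivity
    rw [hLdef]
    nlinarith
  obtain ⟨k, hkdef⟩ : ∃ k, k = ε ^ 2 * R ^ 2 / (γ - 1) := ⟨_, rfl⟩
  have hk : 0 < k := by rw [hkdef]; positivity
  refine ⟨min 1 (k * L / (2 * M)), by positivity, k * L / (2 * Γ ^ 2), by positivity, ?_⟩
  intro φb β hφ hφδ hβ hβ1 hβ2 x hx
  have hw : 0 < Real.sqrt φb := Real.sqrt_pos.mpr hφ
  have hΓw : 0 < Γ * Real.sqrt φb := by positivity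
  rw [le_div_iff₀ hΓw] at hβ1
  rw [div_le_one hΓw] at hβ2
  have hB : 0 < Bfun β x := by unfold Bfun; positivity
  have hBβ : β⁻¹ ≤ Bfun β x := by unfold Bfun; linarith
  have hinv : Γ⁻¹ * (Real.sqrt φb)⁻¹ = (Γ * Real.sqrt φb)⁻¹ := by rw [mul_inv]
  have hden : 0 < x + (Γ * Real.sqrt φb)⁻¹ := by positivity
  have hs1 : 1 ≤ Sfun β Γ φb x := by
    unfold Sfun
    rw [hinv, one_le_div hden]
    have := inv_anti₀ hβ hβ2
    linarith
  have hs2 : Sfun β Γ φb x ≤ θ⁻¹ := by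
    unfold Sfun
    rw [hinv, div_le_iff₀ hden]
    have h1 := inv_anti₀ (by positivity) hβ1
    rw [mul_inv] at h1
    have h2 : 1 ≤ θ⁻¹ := (one_le_inv₀ hθ).mpr hθ1
    nlinarith
  obtain ⟨t, htdef⟩ : ∃ t, t = ((Bfun β x) ^ 2 * Γ ^ 2)⁻¹ := ⟨_, rfl⟩
  have ht : 0 < t := by rw [htdef]; positivity
  have htφ : t ≤ φb := by
    have h1 : 1 ≤ β * Bfun β x := by
      have := mul_le_mul_of_nonneg_left hBβ hβ.le
      rwa [mul_inv_cancel₀ hβ.ne'] at this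
    have h2 : 1 ≤ Γ * Real.sqrt φb * Bfun β x :=
      h1.trans (mul_le_mul_of_nonneg_right hβ2 hB.le)
    have h3 : 1 ≤ (Γ * Real.sqrt φb * Bfun β x) ^ 2 := one_le_pow₀ h2
    rw [mul_pow, mul_pow, Real.sq_sqrt hφ.le] at h3
    rw [htdef, inv_le_iff_one_le_mul₀ (by positivity)]
    linarith
  have ht1 : t ≤ 1 := (htφ.trans hφδ).trans (min_le_left _ _)
  have ht2 : t ≤ k * L / (2 * M) := (htφ.trans hφδ).trans (min_le_right _ _)
  have hmain := hbound (Sfun β Γ φb x) t hs1 hs2 ht.le ht1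
  have hc : k * L / (2 * Γ ^ 2) / (Bfun β x) ^ 2 = k * L / 2 * t := by
    rw [htdef]
    field_simp
  rw [hc]
  unfold q1 q2 q3 q4 q5
  simp only [div_eq_mul_inv _ ((Bfun β x) ^ 2 * Γ ^ 2), ← htdef]
  refine hmain.trans ?_
  rw [← hkdef]
  have hLs : L ≤ ε * (1 + R * T + 3 / 2 * (γ - 1) * (R * T)) * (Sfun β Γ φb x) ^ 2
          + (4 + γ * (γ + 1) * (R * T)) * (Sfun β Γ φb x) ^ 3
          - Γ ^ 2 / 2 * (ε * (ε - 1) * (ε - 2)) := by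
    have h1 : 1 ≤ (Sfun β Γ φb x) ^ 2 := one_le_pow₀ hs1
    have h2 : 1 ≤ (Sfun β Γ φb x) ^ 3 := one_le_pow₀ hs1
    have h3 := le_mul_of_one_le_right
      (show 0 ≤ ε * (1 + R * T + 3 / 2 * (γ - 1) * (R * T)) by positivity) h1
    have h4 := le_mul_of_one_le_right
      (show 0 ≤ 4 + γ * (γ + 1) * (R * T) by positivity) h2
    rw [hLdef]
    linarith
  have h5 := mul_le_mul_of_nonneg_left hLs (show 0 ≤ k * t by positivity)
  rw [le_div_iff₀ (by positivity)] at ht2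
  have h6 := mul_le_mul_of_nonneg_left ht2 ht.le
  linarith
end

section
/- Let additionally m > 0 and u∞ = −√((γRT∞+1)/m). There exist δ > 0 and c > 0, depending only on γ, R, T∞, m, θ and ε, such that whenever φ_b ∈ (0, δ], one has for every x₁ ≥ 0 and all real numbers φ, ψ₁, ζ: |u∞| q₁(x₁) φ² + q₂(x₁) φψ₁ + (1/|u∞|) q₃(x₁) ψ₁² + |u∞| q₄(x₁) ζ² + q₅(x₁) ζψ₁ ≥ c B(x₁)^{−2} (φ² + ψ₁² + ζ²). -/
lemma aux_bound_s16 (L a b d : ℝ) : ∃ M, 0 ≤ M ∧ ∀ S, 1 ≤ S → S ≤ L → |a * S ^ 2 + b * S ^ 3 + d| ≤ M := by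
  refine ⟨|a| * L ^ 2 + |b| * |L| ^ 3 + |d|, by positivity, fun S h1 h2 => ?_⟩
  have hS : 0 ≤ S := by linarith
  have hL : |L| = L := abs_of_nonneg (by linarith)
  calc |a * S ^ 2 + b * S ^ 3 + d| ≤ |a * S ^ 2| + |b * S ^ 3| + |d| := abs_add_three _ _ _
    _ = |a| * S ^ 2 + |b| * S ^ 3 + |d| := by
      rw [abs_mul, abs_mul, abs_of_nonneg (pow_nonneg hS 2), abs_of_nonneg (pow_nonneg hS 3)]
    _ ≤ |a| * L ^ 2 + |b| * |L| ^ 3 + |d| := by rw [hL]; gcongr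

lemma aux_cross (p M e a s : ℝ) (hp : 0 < p) (he : |e| ≤ M) :
    -(p / 4 * s ^ 2 + M ^ 2 / p * a ^ 2) ≤ e * a * s := by
  have h1 : e ^ 2 ≤ M ^ 2 := by rw [← sq_abs e]; gcongr
  have h2 : e ^ 2 / p * a ^ 2 ≤ M ^ 2 / p * a ^ 2 := by gcongr
  have h3 : p / 4 * s ^ 2 + e ^ 2 / p * a ^ 2 + e * a * s = (p * s / 2 + e * a) ^ 2 / p := by
    field_simp; ring
  have h4 : 0 ≤ (p * s / 2 + e * a) ^ 2 / p := by positivity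
  linarith

lemma aux_form_s16 (A D p M k : ℝ) (hA : 0 < A) (hD : 0 < D) (hp : 0 < p) (hM : 0 ≤ M) :
    ∃ δ > 0, ∃ c > 0, ∀ t P e1 e2 e3 e4 : ℝ, 0 < t → t ≤ δ → p ≤ P →
      |e1| ≤ M → |e2| ≤ M → |e3| ≤ M → |e4| ≤ M → ∀ f s z : ℝ,
      c * t * (f ^ 2 + s ^ 2 + z ^ 2) ≤ A * (f - s) ^ 2 + D * (z - k * s) ^ 2
        + t * (P * s ^ 2 + e1 * (f - s) ^ 2 + e2 * (f - s) * s
          + e3 * (z - k * s) ^ 2 + e4 * (z - k * s) * s) := by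
  obtain ⟨K, hK⟩ : ∃ K, K = M + M ^ 2 / p + p := ⟨_, rfl⟩
  obtain ⟨μ, hμ⟩ : ∃ μ, μ = min A D := ⟨_, rfl⟩
  have hμ0 : 0 < μ := by rw [hμ]; exact lt_min hA hD
  have hK0 : 0 < K := by rw [hK]; positivity
  refine ⟨μ / K, by positivity, p / 2 / (3 + 2 * k ^ 2), by positivity, ?_⟩
  intro t P e1 e2 e3 e4 ht htd hP h1 h2 h3 h4 f s z
  have htK : t * K ≤ μ := by rwa [le_div_iff₀ hK0] at htd
  have hμA : μ ≤ A := by rw [hμ]; exact min_le_left _ _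
  have hμD : μ ≤ D := by rw [hμ]; exact min_le_right _ _
  obtain ⟨a, ha⟩ : ∃ a, a = f - s := ⟨_, rfl⟩
  obtain ⟨b, hb⟩ : ∃ b, b = z - k * s := ⟨_, rfl⟩
  have hf : f = a + s := by linarith
  have hz : z = b + k * s := by linarith
  rw [← ha, ← hb]
  have c2 := aux_cross p M e2 a s hp h2
  have c4 := aux_cross p M e4 b s hp h4
  have c1 : -M * a ^ 2 ≤ e1 * a ^ 2 := by gcongr; exact (abs_le.1 h1).1
  have c3 : -M * b ^ 2 ≤ e3 * b ^ 2 := by gcongr; exact (abs_le.1 h3).1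
  have c0 : p * s ^ 2 ≤ P * s ^ 2 := by gcongr
  have key : t * (p / 2 * s ^ 2 - (M + M ^ 2 / p) * a ^ 2 - (M + M ^ 2 / p) * b ^ 2) ≤
      t * (P * s ^ 2 + e1 * a ^ 2 + e2 * a * s + e3 * b ^ 2 + e4 * b * s) := by
    gcongr; linarith
  have hAa : t * K * a ^ 2 ≤ A * a ^ 2 := by gcongr; linarith
  have hDb : t * K * b ^ 2 ≤ D * b ^ 2 := by gcongr; linarith
  have hn : f ^ 2 + s ^ 2 + z ^ 2 ≤ (3 + 2 * k ^ 2) * (a ^ 2 + b ^ 2 + s ^ 2) := by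
    rw [hf, hz]
    nlinarith [sq_nonneg (a - s), sq_nonneg (b - k * s), sq_nonneg (k * a), sq_nonneg (k * b),
      sq_nonneg a, sq_nonneg b, sq_nonneg s]
  have hfin : p / 2 / (3 + 2 * k ^ 2) * t * (f ^ 2 + s ^ 2 + z ^ 2) ≤
      p / 2 * t * (a ^ 2 + b ^ 2 + s ^ 2) := by
    calc p / 2 / (3 + 2 * k ^ 2) * t * (f ^ 2 + s ^ 2 + z ^ 2)
        ≤ p / 2 / (3 + 2 * k ^ 2) * t * ((3 + 2 * k ^ 2) * (a ^ 2 + b ^ 2 + s ^ 2)) := by gcongr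
      _ = _ := by field_simp
  have e : t * K * a ^ 2 + t * K * b ^ 2 = t * ((M + M ^ 2 / p) * a ^ 2 + (M + M ^ 2 / p) * b ^ 2)
     + t * p * (a ^ 2 + b ^ 2) := by rw [hK]; ring
  have : 0 ≤ t * p * (a ^ 2 + b ^ 2) := by positivity
  linarith

lemma aux_root (γ l ε : ℝ) (hγ : 1 < γ) (hl : 4 < l)
    (h : l * (l - 1) * (l - 2) - 12 * (2 * l / (1 + γ) + 2) = 0) (h4 : 4 ≤ ε) (hε : ε < l) :
    ε * (ε - 1) * (ε - 2) ≤ 12 * (2 * ε / (1 + γ) + 2) := by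
  obtain ⟨g, hg⟩ : ∃ g, g = 2 / (1 + γ) := ⟨_, rfl⟩
  have e1 : 2 * l / (1 + γ) = g * l := by rw [hg]; ring
  have e2 : 2 * ε / (1 + γ) = g * ε := by rw [hg]; ring
  rw [e1] at h
  rw [e2]
  have h5 : (ε - 1) * (ε - 2) ≤ (l - 1) * (l - 2) := by nlinarith
  have h6 : l * (ε * (ε - 1) * (ε - 2)) ≤ l * (12 * (g * ε + 2)) := by
    have : ε * l * ((ε - 1) * (ε - 2)) ≤ ε * l * ((l - 1) * (l - 2)) := by gcongr
    have h7 : ε * (l * (l - 1) * (l - 2)) = ε * (12 * (g * l + 2)) := by congr 1; linarith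
    nlinarith
  exact le_of_mul_le_mul_left h6 (by linarith)

lemma aux_P (γ R T G ε S : ℝ) (hγ : 1 < γ) (hR : 0 < R) (hT : 0 < T)
    (hG : G = ((γ ^ 2 + γ) * R * T + 2) / 12) (h4 : 4 ≤ ε)
    (h : ε * (ε - 1) * (ε - 2) ≤ 12 * (2 * ε / (1 + γ) + 2)) (hS : 1 ≤ S) :
    2 ≤ ε * (1 + R * T * (3 * γ - 1) / 2) * S ^ 2 + (4 + R * T * (γ ^ 2 + γ)) * S ^ 3
      - G / 2 * ε * (ε - 1) * (ε - 2) := by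
  have hRT : 0 < R * T := by positivity
  have hG0 : 0 < G := by rw [hG]; positivity
  have s2 : 1 ≤ S ^ 2 := one_le_pow₀ hS
  have s3 : 1 ≤ S ^ 3 := one_le_pow₀ hS
  have k1 : 0 ≤ ε * (1 + R * T * (3 * γ - 1) / 2) := by
    have : 0 ≤ 3 * γ - 1 := by linarith
    positivity
  have k2 : 0 ≤ 4 + R * T * (γ ^ 2 + γ) := by positivity
  have b1 := mul_le_mul_of_nonneg_left s2 k1
  have b2 := mul_le_mul_of_nonneg_left s3 k2
  have b3 : G / 2 * (ε * (ε - 1) * (ε - 2)) ≤ G / 2 * (12 * (2 * ε / (1 + γ) + 2)) := by gcongr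
  have e : G / 2 * (12 * (2 * ε / (1 + γ) + 2)) =
      ε * (γ * (R * T)) + ε * (2 / (1 + γ)) + (γ ^ 2 + γ) * (R * T) + 2 := by
    rw [hG]; field_simp; ring
  have g1 : ε * (2 / (1 + γ)) ≤ ε * 1 := by
    gcongr
    rw [div_le_one (by linarith)]; linarith
  have g2 : 0 ≤ ε * (R * T) * (γ - 1) := by
    have : 0 ≤ γ - 1 := by linarith
    positivity
  nlinarith

/-- Positive definiteness with margin `B(x₁)^{−2}` (paper eq. (47)) of the
degenerate-case quadratic form `Q` in `(φ, ψ₁, ζ)`, where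
`u∞ = −√((γRT∞+1)/m)` and `|u∞| = −u∞`. -/
theorem degenerate_quadratic_form_coercive
    (γ R T Γ l₀ ε θ m uinf : ℝ)
    (hγ : 1 < γ) (hR : 0 < R) (hT : 0 < T) (hm : 0 < m)
    (hΓ : Γ = Real.sqrt (((γ ^ 2 + γ) * R * T + 2) / 12))
    (hl₀ : 4 < l₀)
    (hl₀root : l₀ * (l₀ - 1) * (l₀ - 2) - 12 * (2 * l₀ / (1 + γ) + 2) = 0)
    (hε4 : 4 ≤ ε) (hεl : ε < l₀)
    (hθ : 0 < θ) (hθ1 : θ ≤ 1)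
    (huinf : uinf = -Real.sqrt ((γ * R * T + 1) / m)) :
    ∃ δ > 0, ∃ c > 0, ∀ φb β : ℝ, 0 < φb → φb ≤ δ → 0 < β →
      θ ≤ β / (Γ * Real.sqrt φb) → β / (Γ * Real.sqrt φb) ≤ 1 →
      ∀ x : ℝ, 0 ≤ x → ∀ φ ψ₁ ζ : ℝ,
        c / (Bfun β x) ^ 2 * (φ ^ 2 + ψ₁ ^ 2 + ζ ^ 2) ≤
          (-uinf) * q1 γ R T Γ ε β φb x * φ ^ 2
            + q2 γ R T Γ ε β φb x * φ * ψ₁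
            + (1 / (-uinf)) * q3 γ R T Γ ε β φb x * ψ₁ ^ 2
            + (-uinf) * q4 γ R T Γ ε β φb x * ζ ^ 2
            + q5 γ R T Γ ε β φb x * ζ * ψ₁ := by
  have hΓ2 : Γ ^ 2 = ((γ ^ 2 + γ) * R * T + 2) / 12 := by
    rw [hΓ, Real.sq_sqrt (by positivity)]
  have hΓ0 : 0 < Γ := by rw [hΓ]; apply Real.sqrt_pos.2; positivity
  obtain ⟨v, hv⟩ : ∃ v, v = -uinf := ⟨_, rfl⟩
  have hv0 : 0 < v := by
    rw [hv, huinf, neg_neg]; apply Real.sqrt_pos.2; positivity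
  have hγ1 : 0 < γ - 1 := by linarith
  have hroot := aux_root γ l₀ ε hγ hl₀ hl₀root hε4 hεl
  obtain ⟨k, hk⟩ : ∃ k, k = (γ - 1) * T := ⟨_, rfl⟩
  have hk0 : 0 < k := by rw [hk]; positivity
  obtain ⟨M1, hM1, H1⟩ := aux_bound_s16 θ⁻¹ ((1 - R * T) * ε / 2) (γ * R * T - 1)
    (-((Γ ^ 2 / 2) * ε * (ε - 1) * (ε - 2)))
  obtain ⟨M2, hM2, H2⟩ := aux_bound_s16 θ⁻¹ (2 * ((1 - R * T) * ε / 2) + 2 * ε * R * T)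
    (2 * (γ * R * T - 1) + 2 * (1 - γ * R * T))
    (2 * (-((Γ ^ 2 / 2) * ε * (ε - 1) * (ε - 2))))
  obtain ⟨M3, hM3, H3⟩ := aux_bound_s16 θ⁻¹ (-(ε * R / (2 * k))) (γ * R / k) 0
  obtain ⟨M4, hM4, H4⟩ := aux_bound_s16 θ⁻¹ (2 * k * (-(ε * R / (2 * k))) + 2 * ε * R)
    (2 * k * (γ * R / k)) 0
  have hε0 : 0 < ε := by linarith
  obtain ⟨δ, hδ, c, hc, H⟩ := aux_form_s16 (ε / 2 * R * T) (ε * R / (2 * k)) 2 (M1 + M2 + M3 + M4) k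
    (by positivity) (by positivity) two_pos (by positivity)
  refine ⟨δ, hδ, c / Γ ^ 2 * (1 / v) * min (v ^ 2) 1, by positivity, ?_⟩
  intro φb β hφ hφδ hβ hb1 hb2 x hx φ ψ ζ
  rw [← hv]
  have hsq : 0 < Real.sqrt φb := Real.sqrt_pos.2 hφ
  obtain ⟨w, hw⟩ : ∃ w, w = Γ * Real.sqrt φb := ⟨_, rfl⟩
  have hw0 : 0 < w := by rw [hw]; positivity
  rw [← hw] at hb1 hb2
  rw [le_div_iff₀ hw0] at hb1
  rw [div_le_one hw0] at hb2
  obtain ⟨S, hS⟩ : ∃ S, S = Sfun β Γ φb x := ⟨_, rfl⟩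
  obtain ⟨B, hB⟩ : ∃ B, B = Bfun β x := ⟨_, rfl⟩
  have hSw : S = (x + β⁻¹) / (x + w⁻¹) := by
    rw [hS, Sfun, hw, mul_inv]
  have hβi : 0 < β⁻¹ := by positivity
  have hwi : 0 < w⁻¹ := by positivity
  have hS1 : 1 ≤ S := by
    rw [hSw, one_le_div (by positivity)]
    gcongr
  have hS2 : S ≤ θ⁻¹ := by
    rw [hSw, div_le_iff₀ (by positivity)]
    have i1 : β⁻¹ ≤ θ⁻¹ * w⁻¹ := by
      rw [← mul_inv]; gcongr
    have i2 : 1 ≤ θ⁻¹ := (one_le_inv₀ hθ).2 hθ1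
    nlinarith
  have hBw : w⁻¹ ≤ B := by
    rw [hB, Bfun]
    have : w⁻¹ ≤ β⁻¹ := by gcongr
    linarith
  have hB0 : 0 < B := by linarith
  obtain ⟨t, ht⟩ : ∃ t, t = 1 / (B ^ 2 * Γ ^ 2) := ⟨_, rfl⟩
  have ht0 : 0 < t := by rw [ht]; positivity
  have htδ : t ≤ δ := by
    have : φb * (B ^ 2 * Γ ^ 2) = (w * B) ^ 2 := by
      rw [hw, mul_pow, mul_pow, Real.sq_sqrt hφ.le]; ring
    have h1 : 1 ≤ w * B := by
      have := mul_le_mul_of_nonneg_left hBw hw0.le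
      rwa [mul_inv_cancel₀ hw0.ne'] at this
    have h2 : 1 ≤ (w * B) ^ 2 := one_le_pow₀ h1
    refine le_trans ?_ hφδ
    rw [ht, div_le_iff₀ (by positivity), this]
    exact h2
  have hP := aux_P γ R T (Γ ^ 2) ε S hγ hR hT hΓ2 hε4 hroot hS1
  have main := H t _ _ _ _ _ ht0 htδ hP
    ((H1 S hS1 hS2).trans (by linarith)) ((H2 S hS1 hS2).trans (by linarith))
    ((H3 S hS1 hS2).trans (by linarith)) ((H4 S hS1 hS2).trans (by linarith)) (v * φ) ψ (v * ζ)
  have hk2 : 2 * (γ - 1) * T = 2 * k := by rw [hk]; ring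
  have hdiv : ∀ y : ℝ, y / (B ^ 2 * Γ ^ 2) = t * y := fun y => by rw [ht]; ring
  unfold q1 q2 q3 q4 q5
  rw [← hS, ← hB, hk2, ← hk]
  simp only [hdiv]
  have hmin : min (v ^ 2) 1 * (φ ^ 2 + ψ ^ 2 + ζ ^ 2) ≤ (v * φ) ^ 2 + ψ ^ 2 + (v * ζ) ^ 2 := by
    have m1 := min_le_left (v ^ 2) 1
    have m2 := min_le_right (v ^ 2) 1
    have j1 := mul_le_mul_of_nonneg_right m1 (sq_nonneg φ)
    have j2 := mul_le_mul_of_nonneg_right m2 (sq_nonneg ψ)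
    have j3 := mul_le_mul_of_nonneg_right m1 (sq_nonneg ζ)
    linarith
  calc c / Γ ^ 2 * (1 / v) * min (v ^ 2) 1 / B ^ 2 * (φ ^ 2 + ψ ^ 2 + ζ ^ 2)
      = 1 / v * (c * t * (min (v ^ 2) 1 * (φ ^ 2 + ψ ^ 2 + ζ ^ 2))) := by
        rw [ht]; field_simp
    _ ≤ 1 / v * (c * t * ((v * φ) ^ 2 + ψ ^ 2 + (v * ζ) ^ 2)) := by gcongr
    _ ≤ 1 / v * _ := mul_le_mul_of_nonneg_left main (by positivity)
    _ = _ := by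
      have hγT : γ = k / T + 1 := by rw [hk]; field_simp; ring
      rw [hγT]
      field_simp
      ring
end

section
/- Suppose γRT∞ < m u∞² < γRT∞ + 1. (i) If φ_b ≠ 0, then the planar stationary problem admits no solution (ñ, ũ, T̃, φ̃). (ii) If φ_b = 0, then any solution (ñ, ũ, T̃, φ̃) of the planar stationary problem is the constant state: ñ(x₁) = 1, ũ(x₁) = u∞, T̃(x₁) = T∞ and φ̃(x₁) = 0 for all x₁ ≥ 0. -/
/-- The planar stationary (sheath) problem for the full Euler–Poisson system on the
half line `[0,∞)`: `ñ, ũ, T̃, φ̃` are continuous on `[0,∞)`, with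
`ñ, ũ, T̃, φ̃, φ̃'` continuously differentiable on `(0,∞)`, satisfying the stationary
equations `(ñũ)' = 0`, `m ñũũ' + (RT̃ñ)' = ñφ̃'`, `ũT̃' + (γ−1)T̃ũ' = 0`,
`φ̃'' = ñ − e^{−φ̃}`, with `inf ñ > 0`, `inf T̃ > 0`, far-field values
`(1, u∞, T∞, 0)` and boundary condition `φ̃(0) = φ_b`. -/
def IsPlanarStationary (γ R Tinf m uinf φb : ℝ) (n u T φ : ℝ → ℝ) : Prop :=
  ContinuousOn n (Set.Ici 0) ∧ ContinuousOn u (Set.Ici 0) ∧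
  ContinuousOn T (Set.Ici 0) ∧ ContinuousOn φ (Set.Ici 0) ∧
  (∃ ε > 0, ∀ x ∈ Set.Ici (0 : ℝ), ε ≤ n x) ∧
  (∃ ε > 0, ∀ x ∈ Set.Ici (0 : ℝ), ε ≤ T x) ∧
  Filter.Tendsto n Filter.atTop (nhds 1) ∧
  Filter.Tendsto u Filter.atTop (nhds uinf) ∧
  Filter.Tendsto T Filter.atTop (nhds Tinf) ∧
  Filter.Tendsto φ Filter.atTop (nhds 0) ∧
  φ 0 = φb ∧
  ∃ n' u' T' φd φd' : ℝ → ℝ,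
    (∀ x ∈ Set.Ioi (0 : ℝ), HasDerivAt n (n' x) x) ∧ ContinuousOn n' (Set.Ioi 0) ∧
    (∀ x ∈ Set.Ioi (0 : ℝ), HasDerivAt u (u' x) x) ∧ ContinuousOn u' (Set.Ioi 0) ∧
    (∀ x ∈ Set.Ioi (0 : ℝ), HasDerivAt T (T' x) x) ∧ ContinuousOn T' (Set.Ioi 0) ∧
    (∀ x ∈ Set.Ioi (0 : ℝ), HasDerivAt φ (φd x) x) ∧ ContinuousOn φd (Set.Ioi 0) ∧
    (∀ x ∈ Set.Ioi (0 : ℝ), HasDerivAt φd (φd' x) x) ∧ ContinuousOn φd' (Set.Ioi 0) ∧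
    (∀ x ∈ Set.Ioi (0 : ℝ), n' x * u x + n x * u' x = 0) ∧
    (∀ x ∈ Set.Ioi (0 : ℝ),
      m * n x * u x * u' x + R * (T' x * n x + T x * n' x) = n x * φd x) ∧
    (∀ x ∈ Set.Ioi (0 : ℝ), u x * T' x + (γ - 1) * T x * u' x = 0) ∧
    (∀ x ∈ Set.Ioi (0 : ℝ), φd' x = n x - Real.exp (-φ x))

lemma const_of_deriv_zero_s17 {f f' : ℝ → ℝ} {L : ℝ}
    (hd : ∀ x ∈ Set.Ioi (0 : ℝ), HasDerivAt f (f' x) x)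
    (h0 : ∀ x ∈ Set.Ioi (0 : ℝ), f' x = 0)
    (hl : Filter.Tendsto f Filter.atTop (nhds L)) :
    ∀ x ∈ Set.Ioi (0 : ℝ), f x = L := by
  intro x hx
  have key : ∀ y ∈ Set.Ioi (0 : ℝ), f y = f x := by
    intro y hy
    refine (isOpen_Ioi (a := (0 : ℝ))).is_const_of_deriv_eq_zero isPreconnected_Ioi ?_ ?_ hy hx
    · intro z hz
      exact (hd z hz).differentiableAt.differentiableWithinAt
    · intro z hz
      simp [(hd z hz).deriv, h0 z hz]
  refine tendsto_nhds_unique (f := f) (l := Filter.atTop) ?_ hl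
  refine (tendsto_const_nhds (x := f x)).congr' ?_
  filter_upwards [Filter.eventually_gt_atTop (0 : ℝ)] with y hy
  exact (key y hy).symm

lemma exists_const_of_deriv_zero {f f' : ℝ → ℝ}
    (hd : ∀ x ∈ Set.Ioi (0 : ℝ), HasDerivAt f (f' x) x)
    (h0 : ∀ x ∈ Set.Ioi (0 : ℝ), f' x = 0) :
    ∀ x ∈ Set.Ioi (0 : ℝ), f x = f 1 := by
  intro x hx
  refine (isOpen_Ioi (a := (0 : ℝ))).is_const_of_deriv_eq_zero isPreconnected_Ioi ?_ ?_ hx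
    (by norm_num)
  · intro z hz
    exact (hd z hz).differentiableAt.differentiableWithinAt
  · intro z hz
    simp [(hd z hz).deriv, h0 z hz]

/-- The local analysis of the Sagdeev potential near `n = 1`. -/
lemma potential_strict_max (γ a b : ℝ) (hγ : 1 < γ) (h1 : γ * b < a) (h2 : a < γ * b + 1) :
    ∃ δ > 0, ∀ s : ℝ, |s - 1| < δ →
      a + b + 1 ≤ a / s + b * s ^ γ +
        Real.exp (-(a / 2 * (1 / s ^ 2 - 1) + b * γ / (γ - 1) * (s ^ (γ - 1) - 1))) → s = 1 := by
  have hg1 : γ - 1 ≠ 0 := by linarith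
  set H : ℝ → ℝ := fun s => a / 2 * (1 / s ^ 2 - 1) + b * γ / (γ - 1) * (s ^ (γ - 1) - 1) with hH
  set H' : ℝ → ℝ := fun s => -a / s ^ 3 + b * γ * s ^ (γ - 2) with hH'
  have hHd : ∀ s > 0, HasDerivAt H (H' s) s := by
    intro s hs
    have e1 : HasDerivAt (fun s : ℝ => 1 / s ^ 2) (-2 / s ^ 3) s := by
      have := (hasDerivAt_pow 2 s).inv (by positivity)
      simp only [one_div]
      refine HasDerivAt.congr_deriv this ?_
      field_simp
      simp [mul_comm]
    have e2 : HasDerivAt (fun s : ℝ => s ^ (γ - 1)) ((γ - 1) * s ^ (γ - 2)) s := by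
      have := Real.hasDerivAt_rpow_const (x := s) (p := γ - 1) (Or.inl hs.ne')
      convert this using 3
      ring
    have := ((e1.sub_const 1).const_mul (a / 2)).add ((e2.sub_const 1).const_mul (b * γ / (γ - 1)))
    refine HasDerivAt.congr_deriv this ?_
    simp only [hH']
    field_simp
  set c : ℝ := (a - γ * b) * (1 - (a - γ * b)) / 4 with hc
  have hcpos : 0 < c := by
    have : 0 < (a - γ * b) * (1 - (a - γ * b)) := mul_pos (by linarith) (by linarith)
    simp only [hc]; linarith
  set F : ℝ → ℝ := fun s => a / s + b * s ^ γ + Real.exp (-H s) + c * (s - 1) ^ 2 with hF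
  set F' : ℝ → ℝ := fun s => H' s * (s - Real.exp (-H s)) + 2 * c * (s - 1) with hF'
  have hFd : ∀ s > 0, HasDerivAt F (F' s) s := by
    intro s hs
    have e1 : HasDerivAt (fun s : ℝ => a / s) (-a / s ^ 2) s := by
      have := (hasDerivAt_inv hs.ne').const_mul a
      simp only [div_eq_mul_inv]
      refine HasDerivAt.congr_deriv this ?_
      ring
    have e2 := (Real.hasDerivAt_rpow_const (x := s) (p := γ) (Or.inl hs.ne')).const_mul b
    have e3 := (hHd s hs).neg.exp
    have e4 : HasDerivAt (fun s : ℝ => c * (s - 1) ^ 2) (2 * c * (s - 1)) s := by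
      have := (((hasDerivAt_id s).sub_const 1).pow 2).const_mul c
      refine HasDerivAt.congr_deriv this ?_
      simp; ring
    have := ((e1.add e2).add e3).add e4
    refine HasDerivAt.congr_deriv this ?_
    have hp : s ^ (γ - 1) = s ^ (γ - 2) * s := by
      rw [← Real.rpow_add_one hs.ne']; congr 1; ring
    simp only [hF', hH', hp, Pi.neg_apply]
    field_simp
    ring
  have hH1 : H 1 = 0 := by simp [hH]
  have hH'1 : H' 1 = γ * b - a := by simp [hH']; ring
  have hH'd : ∃ d, HasDerivAt H' d 1 := by
    have e1 : DifferentiableAt ℝ H' 1 := by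
      have : DifferentiableAt ℝ (fun s : ℝ => s ^ (γ - 2)) 1 :=
        (Real.hasDerivAt_rpow_const (x := 1) (p := γ - 2) (Or.inl one_ne_zero)).differentiableAt
      have h3 : DifferentiableAt ℝ (fun s : ℝ => -a / s ^ 3) 1 := by
        refine DifferentiableAt.div (by fun_prop) (by fun_prop) (by norm_num)
      exact h3.add (this.const_mul (b * γ))
    exact ⟨_, e1.hasDerivAt⟩
  obtain ⟨d, hd⟩ := hH'd
  have hF'd : HasDerivAt F' ((γ * b - a) * (1 + (γ * b - a)) + 2 * c) 1 := by
    have e3 := (hHd 1 one_pos).neg.exp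
    have e4 := hd.mul ((hasDerivAt_id (1 : ℝ)).sub e3)
    have e5 := ((hasDerivAt_id (1 : ℝ)).sub_const 1).const_mul (2 * c)
    have := e4.add e5
    refine HasDerivAt.congr_deriv this ?_
    simp [hH1, hH'1]
    left; ring
  have hdF : deriv F =ᶠ[nhds 1] F' := by
    filter_upwards [lt_mem_nhds (one_pos : (0 : ℝ) < 1)] with s hs
    exact (hFd s hs).deriv
  have hmax : IsLocalMax F 1 := by
    apply isLocalMax_of_deriv_deriv_neg
    · rw [hdF.deriv_eq, hF'd.deriv]
      have : 0 < c := hcpos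
      have h4 : (γ * b - a) * (1 + (γ * b - a)) = -4 * c := by simp only [hc]; ring
      linarith
    · rw [(hFd 1 one_pos).deriv]
      simp [hF', hH1]
    · exact (hFd 1 one_pos).continuousAt
  obtain ⟨δ, hδ, hball⟩ := Metric.eventually_nhds_iff.1 hmax
  refine ⟨δ, hδ, fun s hs hle => ?_⟩
  have h3 := hball (y := s) (by rwa [Real.dist_eq])
  have h4 : F 1 = a + b + 1 := by simp [hF, hH1]
  rw [h4] at h3
  have h5 : c * (s - 1) ^ 2 ≤ 0 := by
    simp only [hF] at h3
    simp only [hH] at h3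
    linarith
  have h6 : (s - 1) ^ 2 ≤ 0 := by
    by_contra hcon
    push Not at hcon
    have := mul_pos hcpos hcon
    linarith
  have h7 : s - 1 = 0 := by
    exact pow_eq_zero_iff (two_ne_zero) |>.1 (le_antisymm h6 (sq_nonneg _))
  linarith

/-- Every solution is the constant state. -/
lemma solution_const
    (γ R Tinf m uinf φb : ℝ)
    (hγ : 1 < γ) (hu : uinf < 0)
    (h1 : γ * R * Tinf < m * uinf ^ 2) (h2 : m * uinf ^ 2 < γ * R * Tinf + 1)
    (n u T φ : ℝ → ℝ) (h : IsPlanarStationary γ R Tinf m uinf φb n u T φ) :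
    ∀ x ∈ Set.Ici (0 : ℝ), n x = 1 ∧ u x = uinf ∧ T x = Tinf ∧ φ x = 0 := by
  obtain ⟨cn, cu, cT, cφ, ⟨ε, hε, hn⟩, -, ln, lu, lT, lφ, -, n', u', T', φd, φd',
    dn, -, du, -, dT, -, dφ, -, dφd, -, E1, E2, E3, E4⟩ := h
  have hg1 : γ - 1 ≠ 0 := by linarith
  have npos : ∀ x ∈ Set.Ioi (0 : ℝ), 0 < n x := fun x hx =>
    lt_of_lt_of_le hε (hn x (Set.mem_Ici.2 (le_of_lt hx)))
  -- mass flux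
  have hflux : ∀ x ∈ Set.Ioi (0 : ℝ), n x * u x = uinf := by
    refine const_of_deriv_zero_s17 (f := fun x => n x * u x) (fun x hx => (dn x hx).mul (du x hx))
      E1 ?_
    simpa using ln.mul lu
  have une : ∀ x ∈ Set.Ioi (0 : ℝ), u x ≠ 0 := by
    intro x hx h0
    have := hflux x hx
    rw [h0] at this
    simp at this
    linarith
  -- adiabatic relation
  have hnT : ∀ x ∈ Set.Ioi (0 : ℝ), n x * T' x = (γ - 1) * T x * n' x := by
    intro x hx
    apply mul_left_cancel₀ (une x hx)
    linear_combination n x * E3 x hx - (γ - 1) * T x * E1 x hx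
  have hTn : ∀ x ∈ Set.Ioi (0 : ℝ), T x * n x ^ (1 - γ) = Tinf := by
    refine const_of_deriv_zero_s17 (f := fun x => T x * n x ^ (1 - γ))
      (fun x hx => (dT x hx).mul ((dn x hx).rpow_const (p := 1 - γ) (Or.inl (npos x hx).ne')))
      ?_ ?_
    · intro x hx
      have hp : n x ^ (1 - γ) = n x ^ (1 - γ - 1) * n x := by
        rw [← Real.rpow_add_one (npos x hx).ne']; congr 1; ring
      rw [hp]
      linear_combination n x ^ (1 - γ - 1) * hnT x hx
    · have := lT.mul (ln.rpow_const (p := 1 - γ) (Or.inl one_ne_zero))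
      simpa using this
  have hT : ∀ x ∈ Set.Ioi (0 : ℝ), T x = Tinf * n x ^ (γ - 1) := by
    intro x hx
    rw [← hTn x hx, mul_assoc, ← Real.rpow_add (npos x hx)]
    simp
  -- Bernoulli
  have hB : ∀ x ∈ Set.Ioi (0 : ℝ), m / 2 * u x ^ 2 + R * γ / (γ - 1) * T x - φ x
      = m / 2 * uinf ^ 2 + R * γ / (γ - 1) * Tinf - 0 := by
    refine const_of_deriv_zero_s17
      (f := fun x => m / 2 * u x ^ 2 + R * γ / (γ - 1) * T x - φ x)
      (fun x hx => ((((du x hx).pow 2).const_mul (m / 2)).add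
        ((dT x hx).const_mul (R * γ / (γ - 1)))).sub (dφ x hx)) ?_ ?_
    · intro x hx
      apply (mul_eq_zero_iff_left (npos x hx).ne').1
      have a1 := hnT x hx
      have a2 := E2 x hx
      simp only [Nat.cast_ofNat, Nat.add_one_sub_one, pow_one]
      field_simp
      linear_combination (γ - 1) * a2 + R * a1
    · exact (((lu.pow 2).const_mul (m / 2)).add (lT.const_mul (R * γ / (γ - 1)))).sub lφ
  -- energy
  set E : ℝ → ℝ := fun x => φd x ^ 2 / 2 - (m * uinf * u x + R * (T x * n x) + Real.exp (-φ x))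
    with hE
  have hEc : ∀ x ∈ Set.Ioi (0 : ℝ), E x = E 1 := by
    refine exists_const_of_deriv_zero
      (fun x hx => (((dφd x hx).pow 2).div_const 2).sub
        ((((du x hx).const_mul (m * uinf)).add
          (((dT x hx).mul (dn x hx)).const_mul R)).add (dφ x hx).neg.exp)) ?_
    intro x hx
    have a1 := hflux x hx
    have a2 := E2 x hx
    have a4 := E4 x hx
    simp
    rw [a4]
    linear_combination m * u' x * a1 - a2
  have hlim : E 1 = -(m * uinf ^ 2 + R * Tinf + 1) := by
    have hmvt : ∀ k : ℕ, ∃ ξ : ℝ, (k : ℝ) + 1 < ξ ∧ φd ξ = φ (k + 2) - φ (k + 1) := by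
      intro k
      have hk : (0 : ℝ) ≤ k := Nat.cast_nonneg k
      obtain ⟨ξ, hξ, he⟩ := exists_hasDerivAt_eq_slope φ φd
        (show (k : ℝ) + 1 < k + 2 by linarith)
        (cφ.mono (fun y hy => Set.mem_Ici.2 (by linarith [hy.1])))
        (fun y hy => dφ y (Set.mem_Ioi.2 (by linarith [hy.1])))
      refine ⟨ξ, hξ.1, ?_⟩
      rw [he]
      have : (k : ℝ) + 2 - (k + 1) = 1 := by ring
      rw [this, div_one]
    choose ξ hξ hξ' using hmvt
    have hcast : Filter.Tendsto (fun k : ℕ => (k : ℝ)) Filter.atTop Filter.atTop :=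
      tendsto_natCast_atTop_atTop
    have tξ : Filter.Tendsto ξ Filter.atTop Filter.atTop :=
      Filter.tendsto_atTop_mono (fun k => by linarith [hξ k]) hcast
    have tφd : Filter.Tendsto (fun k => φd (ξ k)) Filter.atTop (nhds 0) := by
      have b1 := lφ.comp (Filter.tendsto_atTop_add_const_right _ (2 : ℝ) hcast)
      have b2 := lφ.comp (Filter.tendsto_atTop_add_const_right _ (1 : ℝ) hcast)
      have b3 := b1.sub b2
      simp only [sub_zero] at b3
      exact b3.congr (fun k => (hξ' k).symm)
    have t1 : Filter.Tendsto (fun k => E (ξ k)) Filter.atTop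
        (nhds (0 ^ 2 / 2 - (m * uinf * uinf + R * (Tinf * 1) + Real.exp (-0)))) := by
      refine ((tφd.pow 2).div_const 2).sub ((((lu.comp tξ).const_mul (m * uinf)).add
        ((((lT.comp tξ)).mul (ln.comp tξ)).const_mul R)).add ?_)
      exact (Real.continuous_exp.tendsto _).comp (lφ.comp tξ).neg
    have t2 : Filter.Tendsto (fun k => E (ξ k)) Filter.atTop (nhds (E 1)) := by
      refine tendsto_const_nhds.congr (fun k => (hEc (ξ k) ?_).symm)
      have hk : (0 : ℝ) ≤ k := Nat.cast_nonneg k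
      exact Set.mem_Ioi.2 (by linarith [hξ k])
    have := tendsto_nhds_unique t2 t1
    rw [this]
    simp
    ring
  obtain ⟨δ, hδ, hloc⟩ := potential_strict_max γ (m * uinf ^ 2) (R * Tinf) hγ
    (by linarith) (by linarith)
  have hiso : ∀ x ∈ Set.Ioi (0 : ℝ), |n x - 1| < δ → n x = 1 := by
    intro x hx hd
    apply hloc _ hd
    have a0 := npos x hx
    have hux : u x = uinf / n x := by
      rw [← hflux x hx]; field_simp
    have hφ : φ x = m * uinf ^ 2 / 2 * (1 / n x ^ 2 - 1)
        + R * Tinf * γ / (γ - 1) * (n x ^ (γ - 1) - 1) := by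
      have := hB x hx
      rw [hT x hx, hux] at this
      have e : (uinf / n x) ^ 2 = uinf ^ 2 * (1 / n x ^ 2) := by field_simp
      rw [e] at this
      linear_combination -this
    rw [← hφ]
    have hen := hEc x hx
    rw [hlim] at hen
    simp only [hE] at hen
    have hp : T x * n x = Tinf * n x ^ γ := by
      rw [hT x hx, mul_assoc, ← Real.rpow_add_one a0.ne']
      congr 2; ring
    rw [hp, hux] at hen
    have e : m * uinf * (uinf / n x) = m * uinf ^ 2 / n x := by ring
    rw [e] at hen
    have := sq_nonneg (φd x)
    linarith
  have hn1 : ∀ x ∈ Set.Ioi (0 : ℝ), n x = 1 := by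
    have htail : ∃ y ∈ Set.Ioi (0 : ℝ), n y = 1 := by
      have ev := (Metric.tendsto_nhds.1 ln δ hδ).and (Filter.eventually_gt_atTop (0 : ℝ))
      obtain ⟨y, hy, hy0⟩ := ev.exists
      exact ⟨y, hy0, hiso y hy0 (by rwa [Real.dist_eq] at hy)⟩
    obtain ⟨y, hy, hny⟩ := htail
    have hconn : (n '' Set.Ioi 0).OrdConnected :=
      (isPreconnected_Ioi.image n (cn.mono Set.Ioi_subset_Ici_self)).ordConnected
    intro x hx
    by_contra hne
    rcases lt_or_gt_of_ne hne with hlt | hgt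
    · obtain ⟨z, hz, hzn⟩ := hconn.out ⟨x, hx, rfl⟩ ⟨y, hy, rfl⟩
        (show max (n x) (1 - δ / 2) ∈ Set.Icc (n x) (n y) from
          ⟨le_max_left _ _, by rw [hny]; exact max_le hlt.le (by linarith)⟩)
      have l1 : n z < 1 := by rw [hzn]; exact max_lt hlt (by linarith)
      have l2 : 1 - δ / 2 ≤ n z := by rw [hzn]; exact le_max_right _ _
      have := hiso z hz (by rw [abs_lt]; constructor <;> linarith)
      linarith
    · obtain ⟨z, hz, hzn⟩ := hconn.out ⟨y, hy, rfl⟩ ⟨x, hx, rfl⟩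
        (show min (n x) (1 + δ / 2) ∈ Set.Icc (n y) (n x) from
          ⟨by rw [hny]; exact le_min hgt.le (by linarith), min_le_left _ _⟩)
      have l1 : 1 < n z := by rw [hzn]; exact lt_min hgt (by linarith)
      have l2 : n z ≤ 1 + δ / 2 := by rw [hzn]; exact min_le_right _ _
      have := hiso z hz (by rw [abs_lt]; constructor <;> linarith)
      linarith
  have hu1 : ∀ x ∈ Set.Ioi (0 : ℝ), u x = uinf := by
    intro x hx
    have := hflux x hx
    rwa [hn1 x hx, one_mul] at this
  have hT1 : ∀ x ∈ Set.Ioi (0 : ℝ), T x = Tinf := by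
    intro x hx
    rw [hT x hx, hn1 x hx]; simp
  have hφ1 : ∀ x ∈ Set.Ioi (0 : ℝ), φ x = 0 := by
    intro x hx
    have := hB x hx
    rw [hu1 x hx, hT1 x hx] at this
    linarith
  have ext : ∀ (f : ℝ → ℝ) (c : ℝ), ContinuousOn f (Set.Ici 0) →
      (∀ x ∈ Set.Ioi (0 : ℝ), f x = c) → ∀ x ∈ Set.Ici (0 : ℝ), f x = c := by
    intro f c hf hc
    have : Set.EqOn f (fun _ => c) (Set.Ioi 0) := hc
    exact this.of_subset_closure hf continuousOn_const Set.Ioi_subset_Ici_self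
      (by rw [closure_Ioi])
  intro x hx
  exact ⟨ext n 1 cn hn1 x hx, ext u _ cu hu1 x hx, ext T _ cT hT1 x hx, ext φ 0 cφ hφ1 x hx⟩

/-- In the forbidden velocity range `γRT∞ < m u∞² < γRT∞ + 1`: (i) if `φ_b ≠ 0` the
planar stationary problem has no solution; (ii) if `φ_b = 0` every solution is the
constant state `(1, u∞, T∞, 0)`. -/
theorem forbidden_range_no_nontrivial_solution
    (γ R Tinf m uinf φb : ℝ)
    (hγ : 1 < γ) (hR : 0 < R) (hT : 0 < Tinf) (hm : 0 < m) (hu : uinf < 0)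
    (h1 : γ * R * Tinf < m * uinf ^ 2) (h2 : m * uinf ^ 2 < γ * R * Tinf + 1) :
    (φb ≠ 0 →
      ¬ ∃ n u T φ : ℝ → ℝ, IsPlanarStationary γ R Tinf m uinf φb n u T φ) ∧
    (φb = 0 →
      ∀ n u T φ : ℝ → ℝ, IsPlanarStationary γ R Tinf m uinf φb n u T φ →
        ∀ x ∈ Set.Ici (0 : ℝ), n x = 1 ∧ u x = uinf ∧ T x = Tinf ∧ φ x = 0) := by
  constructor
  · rintro hb ⟨n, u, T, φ, h⟩
    have h0 := (solution_const γ R Tinf m uinf φb hγ hu h1 h2 n u T φ h 0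
      (Set.mem_Ici.2 le_rfl)).2.2.2
    obtain ⟨-, -, -, -, -, -, -, -, -, -, hb0, -⟩ := h
    exact hb (hb0.symm.trans h0)
  · intro _ n u T φ h
    exact solution_const γ R Tinf m uinf φb hγ hu h1 h2 n u T φ h
end

section
/- Suppose m u∞² > γRT∞ + 1 and u∞ < 0 (the nondegenerate Bohm criterion). Then there exists δ > 0 such that for every real φ_b with 0 < |φ_b| ≤ δ, the planar stationary problem with boundary value φ̃(0) = φ_b admits a solution (ñ, ũ, T̃, φ̃) with φ̃ monotone, and this monotone solution is unique. -/
open Set Filter Topology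

lemma aux_const (F : ℝ → ℝ) (L : ℝ) (hc : ContinuousOn F (Ici 0))
    (hd : ∀ x ∈ Ioi (0:ℝ), HasDerivAt F 0 x) (hl : Tendsto F atTop (𝓝 L)) :
    ∀ x ∈ Ici (0:ℝ), F x = L := by
  have h0 : ∀ x ∈ Ici (0:ℝ), F x = F 0 := by
    intro x hx
    have hx0 : (0:ℝ) ≤ x := hx
    refine constant_of_has_deriv_right_zero (a := 0) (b := x)
      (hc.mono Icc_subset_Ici_self) ?_ x ⟨hx0, le_rfl⟩ |>.trans rfl
    intro y hy
    rcases eq_or_lt_of_le hy.1 with h | h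
    · subst h
      apply hasDerivWithinAt_Ici_of_tendsto_deriv (s := Ioi 0)
      · intro z hz
        exact (hd z hz).differentiableAt.differentiableWithinAt
      · exact (hc 0 (by simp)).mono Ioi_subset_Ici_self
      · exact self_mem_nhdsWithin
      · refine Tendsto.congr' ?_ tendsto_const_nhds
        filter_upwards [self_mem_nhdsWithin] with z hz
        exact (hd z hz).deriv.symm
    · exact (hd y h).hasDerivWithinAt
  have h1 : Tendsto F atTop (𝓝 (F 0)) := by
    refine Tendsto.congr' ?_ tendsto_const_nhds
    filter_upwards [eventually_ge_atTop 0] with z hz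
    exact (h0 z hz).symm
  intro x hx
  rw [h0 x hx]
  exact tendsto_nhds_unique h1 hl

lemma aux_unique (h : ℝ → ℝ) (δ : ℝ) (hmono : MonotoneOn h (Icc (-δ) δ))
    (p q pd qd : ℝ → ℝ) (hpc : ContinuousOn p (Ici 0)) (hqc : ContinuousOn q (Ici 0))
    (hp : ∀ x ∈ Ici (0:ℝ), p x ∈ Icc (-δ) δ) (hq : ∀ x ∈ Ici (0:ℝ), q x ∈ Icc (-δ) δ)
    (hp1 : ∀ x ∈ Ioi (0:ℝ), HasDerivAt p (pd x) x)
    (hq1 : ∀ x ∈ Ioi (0:ℝ), HasDerivAt q (qd x) x)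
    (hp2 : ∀ x ∈ Ioi (0:ℝ), HasDerivAt pd (h (p x)) x)
    (hq2 : ∀ x ∈ Ioi (0:ℝ), HasDerivAt qd (h (q x)) x)
    (h0 : p 0 = q 0) (hpl : Tendsto p atTop (𝓝 0)) (hql : Tendsto q atTop (𝓝 0)) :
    ∀ x ∈ Ici (0:ℝ), p x = q x := by
  set w : ℝ → ℝ := fun x => (p x - q x)^2 with hw
  have hconv : ConvexOn ℝ (Ici (0:ℝ)) w := by
    apply convexOn_of_hasDerivWithinAt2_nonneg (convex_Ici 0)
      (f' := fun x => 2 * (p x - q x) * (pd x - qd x))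
      (f'' := fun x => 2 * (pd x - qd x)^2 + 2 * (p x - q x) * (h (p x) - h (q x)))
    · exact (hpc.sub hqc).pow 2
    · intro x hx
      rw [interior_Ici] at hx
      have := ((hp1 x hx).sub (hq1 x hx)).pow 2
      refine (this.congr_deriv ?_).hasDerivWithinAt
      simp
    · intro x hx
      rw [interior_Ici] at hx
      have := ((((hp1 x hx).sub (hq1 x hx)).const_mul 2).mul ((hp2 x hx).sub (hq2 x hx)))
      refine (this.congr_deriv ?_).hasDerivWithinAt
      simp; ring
    · intro x hx
      rw [interior_Ici] at hx
      have hx' : x ∈ Ici (0:ℝ) := mem_Ici.2 (le_of_lt (mem_Ioi.1 hx))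
      have : 0 ≤ (p x - q x) * (h (p x) - h (q x)) := by
        rcases le_total (p x) (q x) with hle | hle
        · have := hmono (hp x hx') (hq x hx') hle
          nlinarith
        · have := hmono (hq x hx') (hp x hx') hle
          nlinarith
      nlinarith [sq_nonneg (pd x - qd x)]
  have hwl : Tendsto w atTop (𝓝 0) := by
    have := (hpl.sub hql).pow 2
    simpa using this
  intro x hx
  have hx0 : (0:ℝ) ≤ x := hx
  have key : w x ≤ 0 := by
    have hle : ∀ᶠ y in atTop, w x ≤ w y := by
      filter_upwards [eventually_gt_atTop x, eventually_gt_atTop 0] with y hy hy0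
      have h00 : w 0 = 0 := by simp [hw, h0]
      have := hconv.2 (show (0:ℝ) ∈ Ici 0 by simp) (show y ∈ Ici (0:ℝ) from hy0.le)
        (show 0 ≤ 1 - x/y by rw [sub_nonneg, div_le_one hy0]; exact hy.le)
        (show 0 ≤ x/y by positivity) (by ring)
      simp only [smul_eq_mul, mul_zero, zero_add, h00] at this
      rw [div_mul_cancel₀ _ hy0.ne'] at this
      have h1 : x / y ≤ 1 := by rw [div_le_one hy0]; exact hy.le
      have h2 : 0 ≤ w y := sq_nonneg _
      nlinarith
    exact ge_of_tendsto hwl hle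
  have : (p x - q x)^2 = 0 := le_antisymm key (sq_nonneg _)
  have := pow_eq_zero_iff (two_ne_zero) |>.1 this
  linarith

lemma aux_exist (h : ℝ → ℝ) (hc : Continuous h) (b c C : ℝ) (hb : 0 < b) (hcp : 0 < c)
    (hlo : ∀ s ∈ Icc 0 b, c * s ≤ h s) (hhi : ∀ s ∈ Icc 0 b, h s ≤ C * s) :
    ∃ p pd : ℝ → ℝ, Continuous p ∧ p 0 = b ∧ (∀ x ∈ Ici (0:ℝ), p x ∈ Icc 0 b) ∧
      AntitoneOn p (Ici 0) ∧ Tendsto p atTop (𝓝 0) ∧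
      (∀ x ∈ Ioi (0:ℝ), HasDerivAt p (pd x) x) ∧
      (∀ x ∈ Ioi (0:ℝ), HasDerivAt pd (h (p x)) x) := by
  have hCp : 0 < C := by
    have h1 := hlo b ⟨hb.le, le_rfl⟩
    have h2 := hhi b ⟨hb.le, le_rfl⟩
    nlinarith
  set V : ℝ → ℝ := fun s => ∫ t in (0:ℝ)..s, h t with hV
  have hVd : ∀ s, HasDerivAt V (h s) s := fun s =>
    intervalIntegral.integral_hasDerivAt_right (hc.intervalIntegrable _ _)
      hc.aestronglyMeasurable.stronglyMeasurableAtFilter hc.continuousAt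
  have hVc : Continuous V := continuous_iff_continuousAt.2 fun s => (hVd s).continuousAt
  have hquad : ∀ a s : ℝ, ∫ t in (0:ℝ)..s, a * t = a * s^2 / 2 := by
    intro a s
    rw [intervalIntegral.integral_const_mul, integral_id]; ring
  have hVlo : ∀ s ∈ Icc 0 b, c * s^2/2 ≤ V s := by
    intro s hs
    rw [← hquad]
    apply intervalIntegral.integral_mono_on hs.1
    · exact (by fun_prop : Continuous fun t : ℝ => c * t).intervalIntegrable _ _
    · exact hc.intervalIntegrable _ _
    · intro t ht; exact hlo t ⟨ht.1, ht.2.trans hs.2⟩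
  have hVhi : ∀ s ∈ Icc 0 b, V s ≤ C * s^2/2 := by
    intro s hs
    rw [← hquad]
    apply intervalIntegral.integral_mono_on hs.1
    · exact hc.intervalIntegrable _ _
    · exact (by fun_prop : Continuous fun t : ℝ => C * t).intervalIntegrable _ _
    · intro t ht; exact hhi t ⟨ht.1, ht.2.trans hs.2⟩
  set G : ℝ → ℝ := fun s => √(2 * V s) with hG
  set e : ℝ → ℝ := fun y => b * Real.exp (-(max y 0)) with he
  have hec : Continuous e := by fun_prop
  have hepos : ∀ y, 0 < e y := fun y => by positivity
  have heb : ∀ y, e y ≤ b := by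
    intro y
    have : Real.exp (-(max y 0)) ≤ 1 := Real.exp_le_one_iff.2 (by simp)
    simp only [he]; nlinarith
  set k : ℝ → ℝ := fun y => e y / G (e y) with hk
  have hGpos : ∀ s, 0 < s → s ≤ b → 0 < G s := by
    intro s h1 h2
    apply Real.sqrt_pos.2
    have := hVlo s ⟨h1.le, h2⟩
    have : 0 < c * s^2 := by positivity
    linarith
  have hGhi : ∀ s, 0 < s → s ≤ b → G s ≤ √C * s := by
    intro s h1 h2
    apply Real.sqrt_le_iff.2
    refine ⟨by positivity, ?_⟩
    have := hVhi s ⟨h1.le, h2⟩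
    rw [mul_pow, Real.sq_sqrt hCp.le]; linarith
  have hGc : Continuous G := by fun_prop
  have hkc : Continuous k := by
    apply hec.div (hGc.comp hec)
    intro y; exact (hGpos _ (hepos y) (heb y)).ne'
  have hklo : ∀ y, 1 / √C ≤ k y := by
    intro y
    rw [div_le_div_iff₀ (by positivity) (hGpos _ (hepos y) (heb y))]
    have := hGhi _ (hepos y) (heb y)
    linarith
  have hkpos : ∀ y, 0 < k y := fun y => lt_of_lt_of_le (by positivity) (hklo y)
  set Θ : ℝ → ℝ := fun y => ∫ z in (0:ℝ)..y, k z with hΘ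
  have hΘd : ∀ s, HasDerivAt Θ (k s) s := fun s =>
    intervalIntegral.integral_hasDerivAt_right (hkc.intervalIntegrable _ _)
      hkc.aestronglyMeasurable.stronglyMeasurableAtFilter hkc.continuousAt
  have hΘc : Continuous Θ := continuous_iff_continuousAt.2 fun s => (hΘd s).continuousAt
  have hΘ0 : Θ 0 = 0 := by simp [hΘ]
  have hΘm : StrictMono Θ := strictMono_of_hasDerivAt_pos hΘd hkpos
  have hΘm2 : Monotone (fun y => Θ y - 1/√C * y) := by
    apply monotone_of_hasDerivAt_nonneg (f' := fun y => k y - 1/√C)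
    · intro y
      have := (hΘd y).sub ((hasDerivAt_id y).const_mul (1/√C))
      exact this.congr_deriv (by simp)
    · intro y; have := hklo y; simp only [Pi.zero_apply]; linarith
  have hsC : 0 < 1/√C := by positivity
  have hΘtop : Tendsto Θ atTop atTop := by
    have h1 : Tendsto (fun y : ℝ => 1/√C * y) atTop atTop := tendsto_id.const_mul_atTop hsC
    refine tendsto_atTop_mono' _ ?_ h1
    filter_upwards [eventually_ge_atTop 0] with y hy
    have := hΘm2 hy
    simp only [hΘ0] at this; linarith
  have hΘbot : Tendsto Θ atBot atBot := by
    have h1 : Tendsto (fun y : ℝ => 1/√C * y) atBot atBot := tendsto_id.const_mul_atBot hsC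
    refine tendsto_atBot_mono' _ ?_ h1
    filter_upwards [eventually_le_atBot 0] with y hy
    have := hΘm2 hy
    simp only [hΘ0] at this; linarith
  have hsurj : Function.Surjective Θ := hΘc.surjective hΘtop hΘbot
  set o : ℝ ≃o ℝ := hΘm.orderIsoOfSurjective Θ hsurj with ho
  have hoΘ : ∀ y, o y = Θ y := fun y => rfl
  set Y : ℝ → ℝ := fun x => o.symm x with hY
  have hΘY : ∀ x, Θ (Y x) = x := fun x => by rw [← hoΘ]; exact o.apply_symm_apply x
  have hYc : Continuous Y := o.symm.continuous
  have hY0 : Y 0 = 0 := by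
    apply hΘm.injective; rw [hΘY, hΘ0]
  have hYm : StrictMono Y := o.symm.strictMono
  have hYtop : Tendsto Y atTop atTop := o.symm.tendsto_atTop
  have hYd : ∀ x, HasDerivAt Y (k (Y x))⁻¹ x := fun x =>
    HasDerivAt.of_local_left_inverse hYc.continuousAt (hΘd _) (hkpos _).ne'
      (Eventually.of_forall hΘY)
  set p : ℝ → ℝ := fun x => b * Real.exp (-(Y x)) with hp
  have hpe : ∀ x, 0 ≤ x → p x = e (Y x) := by
    intro x hx
    have : 0 ≤ Y x := by rw [← hY0]; exact hYm.monotone hx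
    simp only [hp, he, max_eq_left this]
  have hpd : ∀ x ∈ Ioi (0:ℝ), HasDerivAt p (-(G (p x))) x := by
    intro x hx
    have := ((hYd x).neg.exp).const_mul b
    refine this.congr_deriv ?_
    have h1 := hpe x (le_of_lt hx)
    have h2 : k (Y x) = p x / G (p x) := by rw [h1]
    have h3 : b * Real.exp (-(Y x)) = p x := rfl
    have h4 : 0 < p x := by positivity
    rw [h2]
    calc _ = b * Real.exp (-(Y x)) * -(p x / G (p x))⁻¹ := by simp only [Pi.neg_apply]; ring
      _ = _ := by rw [h3, inv_div]; field_simp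
  refine ⟨p, fun x => -(G (p x)), by fun_prop, by simp [hp, hY0], ?_, ?_, ?_, hpd, ?_⟩
  · intro x hx
    rw [hpe x hx]
    exact ⟨(hepos _).le, heb _⟩
  · intro x _ y _ hxy
    have := hYm.monotone hxy
    simp only [hp]; gcongr
  · have := (Real.tendsto_exp_neg_atTop_nhds_zero.comp hYtop).const_mul b
    simpa using this
  · intro x hx
    have hppos : 0 < p x := by positivity
    have hpb : p x ≤ b := by rw [hpe x (le_of_lt hx)]; exact heb _
    have hG0 := hGpos _ hppos hpb
    have h1 : HasDerivAt (fun x => 2 * V (p x)) (2 * (h (p x) * -(G (p x)))) x :=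
      ((hVd (p x)).comp x (hpd x hx)).const_mul 2
    have h2 : 2 * V (p x) ≠ 0 := by
      have := Real.sqrt_pos.1 hG0
      exact this.ne'
    have h3 := (h1.sqrt h2).neg
    refine h3.congr_deriv ?_
    change -(2 * (h (p x) * -(G (p x))) / (2 * G (p x))) = h (p x)
    field_simp

lemma aux_inverse (f f' : ℝ → ℝ) (hd : ∀ n, 0 < n → HasDerivAt f (f' n) n)
    (hc : ContinuousAt f' 1) (h1 : f 1 = 0) (h1' : f' 1 < -1) :
    ∃ (η δ c C : ℝ) (g : ℝ → ℝ), 0 < η ∧ η < 1 ∧ 0 < δ ∧ 0 < c ∧ Continuous g ∧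
      (∀ s, g s ∈ Icc (1-η) (1+η)) ∧
      (∀ n ∈ Icc (1-η) (1+η), f' n ≠ 0) ∧
      (∀ s ∈ Icc (-δ) δ, HasDerivAt g (f' (g s))⁻¹ s) ∧
      (∀ n ∈ Icc (1-η) (1+η), f n ∈ Icc (-δ) δ → g (f n) = n) ∧
      g 0 = 1 ∧
      δ < f (1-η) ∧ f (1+η) < -δ ∧
      (∀ s ∈ Icc (-δ) δ, ∀ t ∈ Icc (-δ) δ, s ≤ t →
        c * (t - s) ≤ (g t - Real.exp (-t)) - (g s - Real.exp (-s)) ∧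
        (g t - Real.exp (-t)) - (g s - Real.exp (-s)) ≤ C * (t - s)) := by
  obtain ⟨L, hL1, hL2⟩ : ∃ L, 1 < L ∧ f' 1 < -L :=
    ⟨(1 - f' 1)/2, by linarith, by linarith⟩
  obtain ⟨ε, hε, hball⟩ := Metric.eventually_nhds_iff.1 (hc.eventually (gt_mem_nhds hL2))
  set η := min (ε/2) (1/2) with hη
  have hη0 : 0 < η := by positivity
  have hη1 : η ≤ 1/2 := min_le_right _ _
  have hηε : η ≤ ε/2 := min_le_left _ _
  have hneg : ∀ n ∈ Icc (1-η) (1+η), f' n < -L := by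
    intro n hn
    apply hball
    rw [Real.dist_eq, abs_lt]
    constructor <;> linarith [hn.1, hn.2]
  have hpos : ∀ n ∈ Icc (1-η) (1+η), 0 < n := fun n hn => by linarith [hn.1]
  have hanti : AntitoneOn (fun n => f n + L * n) (Icc (1-η) (1+η)) := by
    have hdd : ∀ n ∈ Icc (1-η) (1+η), HasDerivAt (fun n => f n + L * n) (f' n + L) n := by
      intro n hn
      exact ((hd n (hpos n hn)).add ((hasDerivAt_id n).const_mul L)).congr_deriv (by simp)
    apply antitoneOn_of_hasDerivWithinAt_nonpos (convex_Icc _ _) (f' := fun n => f' n + L)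
    · intro n hn
      exact (hdd n hn).continuousAt.continuousWithinAt
    · intro n hn
      exact (hdd n (interior_subset hn)).hasDerivWithinAt
    · intro n hn
      have := hneg n (interior_subset hn)
      linarith
  have h1m : (1:ℝ) ∈ Icc (1-η) (1+η) := ⟨by linarith, by linarith⟩
  have hlm : (1-η) ∈ Icc (1-η) (1+η) := ⟨by linarith, by linarith⟩
  have hrm : (1+η) ∈ Icc (1-η) (1+η) := ⟨by linarith, by linarith⟩
  have hl : L * η ≤ f (1-η) := by
    have := hanti hlm h1m (by linarith : (1:ℝ)-η ≤ 1)
    simp only [h1] at this; linarith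
  have hr : f (1+η) ≤ -(L * η) := by
    have := hanti h1m hrm (by linarith : (1:ℝ) ≤ 1 + η)
    simp only [h1] at this; linarith
  have hLη : 0 < L * η := by positivity
  set D := L * η with hD
  have hexp : ∀ n ∈ Icc (1-η) (1+η), ∀ k ∈ Icc (1-η) (1+η), L * |n - k| ≤ |f n - f k| := by
    have : ∀ n ∈ Icc (1-η) (1+η), ∀ k ∈ Icc (1-η) (1+η), n ≤ k → L * |n - k| ≤ |f n - f k| := by
      intro n hn k hk hnk
      have := hanti hn hk hnk
      simp only at this
      rw [abs_sub_comm n k, abs_of_nonneg (by linarith : 0 ≤ k - n)]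
      refine le_trans ?_ (le_abs_self _)
      linarith
    intro n hn k hk
    rcases le_total n k with hh | hh
    · exact this n hn k hk hh
    · rw [abs_sub_comm n k, abs_sub_comm (f n)]; exact this k hk n hn hh
  have hfc : ContinuousOn f (Icc (1-η) (1+η)) := fun n hn =>
    (hd n (hpos n hn)).continuousAt.continuousWithinAt
  have hex : ∀ s, ∃ n ∈ Icc (1-η) (1+η), f n = max (-D) (min D s) := by
    intro s
    have := intermediate_value_Icc' (by linarith : 1 - η ≤ 1 + η) hfc
    have h2 : max (-D) (min D s) ∈ Icc (f (1+η)) (f (1-η)) := by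
      refine ⟨hr.trans (le_max_left _ _), le_trans (max_le ?_ (min_le_left _ _)) hl⟩
      linarith
    obtain ⟨n, hn, h⟩ := this h2
    exact ⟨n, hn, h⟩
  choose g hgJ hgf using hex
  have hclamp : ∀ s, s ∈ Icc (-D) D → max (-D) (min D s) = s := by
    intro s hs
    rw [min_eq_right hs.2, max_eq_right hs.1]
  have hfg : ∀ s ∈ Icc (-D) D, f (g s) = s := fun s hs => by rw [hgf, hclamp s hs]
  have hcl : Continuous (fun s : ℝ => max (-D) (min D s)) := by fun_prop
  have hgc : Continuous g := by
    rw [continuous_iff_continuousAt]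
    intro s
    have h0 : Tendsto (fun t => L⁻¹ * |max (-D) (min D t) - max (-D) (min D s)|) (𝓝 s) (𝓝 0) := by
      have : Continuous (fun t => L⁻¹ * |max (-D) (min D t) - max (-D) (min D s)|) := by fun_prop
      have := this.tendsto s
      simpa using this
    refine tendsto_iff_dist_tendsto_zero.2 (squeeze_zero (fun _ => dist_nonneg) ?_ h0)
    intro t
    have := hexp _ (hgJ t) _ (hgJ s)
    rw [hgf, hgf] at this
    rw [Real.dist_eq, inv_mul_eq_div, le_div_iff₀ (by linarith)]
    linarith
  have hgf2 : ∀ n ∈ Icc (1-η) (1+η), f n ∈ Icc (-D) D → g (f n) = n := by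
    intro n hn hfn
    have := hexp _ (hgJ (f n)) _ hn
    rw [hfg _ hfn] at this
    simp only [sub_self, abs_zero] at this
    have h3 : |g (f n) - n| ≤ 0 := by
      have := abs_nonneg (g (f n) - n)
      nlinarith
    have := abs_nonpos_iff.1 h3
    linarith
  have hlog : 0 < Real.log L := Real.log_pos hL1
  set δ := min (D/2) (Real.log L / 2) with hδ
  have hδ0 : 0 < δ := by positivity
  have hδD : δ ≤ D/2 := min_le_left _ _
  have hδL : δ ≤ Real.log L/2 := min_le_right _ _
  have hsub : ∀ s ∈ Icc (-δ) δ, s ∈ Icc (-D) D := fun s hs =>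
    ⟨by linarith [hs.1], by linarith [hs.2]⟩
  have hcpos : 0 < Real.exp (-δ) - 1/L := by
    have : 1/L = Real.exp (-(Real.log L)) := by
      rw [Real.exp_neg, Real.exp_log (by linarith)]; simp
    rw [this, sub_pos]
    apply Real.exp_lt_exp.2
    linarith
  refine ⟨η, δ, Real.exp (-δ) - 1/L, Real.exp δ + 1/L, g, hη0, by linarith, hδ0, hcpos, hgc, hgJ,
    fun n hn => by have := hneg n hn; linarith, ?_, ?_, ?_, by linarith, by linarith, ?_⟩
  · intro s hs
    apply HasDerivAt.of_local_left_inverse hgc.continuousAt (hd _ (hpos _ (hgJ s)))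
    · have := hneg _ (hgJ s); linarith
    · have : Icc (-D) D ∈ 𝓝 s := Icc_mem_nhds (by linarith [hs.1]) (by linarith [hs.2])
      filter_upwards [this] with t ht using hfg t ht
  · intro n hn hfn
    exact hgf2 n hn (hsub _ hfn)
  · have := hgf2 1 h1m (by rw [h1]; exact ⟨by linarith, by linarith⟩)
    rwa [h1] at this
  · intro s hs t ht hst
    have hA := hexp _ (hgJ t) _ (hgJ s)
    rw [hfg t (hsub t ht), hfg s (hsub s hs), abs_of_nonneg (by linarith : 0 ≤ t - s)] at hA
    have hA' : |g t - g s| ≤ 1/L * (t - s) := by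
      rw [one_div, inv_mul_eq_div, le_div_iff₀ (by linarith)]; linarith
    have hB := abs_le.1 hA'
    have e1 : Real.exp (-s) = Real.exp (-t) * Real.exp (t - s) := by
      rw [← Real.exp_add]; ring_nf
    have e2 : Real.exp (-t) = Real.exp (-s) * Real.exp (-(t - s)) := by
      rw [← Real.exp_add]; ring_nf
    have e3 := Real.add_one_le_exp (t - s)
    have e4 := Real.add_one_le_exp (-(t - s))
    have e5 : Real.exp (-δ) ≤ Real.exp (-t) := Real.exp_le_exp.2 (by linarith [ht.2])
    have e6 : Real.exp (-s) ≤ Real.exp δ := Real.exp_le_exp.2 (by linarith [hs.1])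
    have p1 := Real.exp_pos (-t)
    have p2 := Real.exp_pos (-s)
    have q1 : Real.exp (-t) * (t - s + 1) ≤ Real.exp (-s) := by
      rw [e1]; exact mul_le_mul_of_nonneg_left e3 p1.le
    have q2 : Real.exp (-s) * (-(t - s) + 1) ≤ Real.exp (-t) := by
      rw [e2]; exact mul_le_mul_of_nonneg_left e4 p2.le
    have q3 : Real.exp (-δ) * (t - s) ≤ Real.exp (-t) * (t - s) :=
      mul_le_mul_of_nonneg_right e5 (by linarith)
    have q4 : Real.exp (-s) * (t - s) ≤ Real.exp δ * (t - s) :=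
      mul_le_mul_of_nonneg_right e6 (by linarith)
    constructor <;> nlinarith [hB.1, hB.2]

noncomputable def bohmF (γ R Tinf m uinf : ℝ) (n : ℝ) : ℝ :=
  m / 2 * ((uinf / n)^2 - uinf^2) + γ * R * Tinf / (γ - 1) * (n ^ (γ - 1) - 1)

noncomputable def bohmF' (γ R Tinf m uinf : ℝ) (n : ℝ) : ℝ :=
  -(m * uinf^2 / n^3) + γ * R * Tinf * n ^ (γ - 2)

lemma bohmF_deriv (γ R Tinf m uinf : ℝ) (hγ : 1 < γ) (n : ℝ) (hn : 0 < n) :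
    HasDerivAt (bohmF γ R Tinf m uinf) (bohmF' γ R Tinf m uinf n) n := by
  have hg : γ - 1 ≠ 0 := by linarith
  have h1 : HasDerivAt (fun n : ℝ => uinf / n) (-uinf / n^2) n := by
    have := (hasDerivAt_const n uinf).div (hasDerivAt_id n) hn.ne'
    exact this.congr_deriv (by simp)
  have h2 : HasDerivAt (fun n : ℝ => n ^ (γ - 1)) ((γ - 1) * n ^ (γ - 1 - 1)) n :=
    Real.hasDerivAt_rpow_const (Or.inl hn.ne')
  have h3 := (((h1.pow 2).sub_const (uinf^2)).const_mul (m/2)).add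
    ((h2.sub_const 1).const_mul (γ * R * Tinf / (γ - 1)))
  refine h3.congr_deriv ?_
  rw [show γ - 1 - 1 = γ - 2 by ring]
  unfold bohmF'
  norm_num
  field_simp

lemma stationary_reduce (γ R Tinf m uinf φb : ℝ) (n u T φ : ℝ → ℝ) (hγ : 1 < γ) (hu : uinf < 0)
    (h : IsPlanarStationary γ R Tinf m uinf φb n u T φ) :
    ∀ x ∈ Ici (0:ℝ), u x = uinf / n x ∧ T x = Tinf * (n x) ^ (γ - 1) ∧
      φ x = bohmF γ R Tinf m uinf (n x) := by
  obtain ⟨hnc, huc, hTc, hφc, ⟨εn, hεn, hn⟩, ⟨εT, hεT, hTp⟩, hnl, hul, hTl, hφl, hφ0,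
    n', u', T', φd, φd', dn, -, du, -, dT, -, dφ, -, -, -, e1, e2, e3, -⟩ := h
  have hg : γ - 1 ≠ 0 := by linarith
  have hnp : ∀ x ∈ Ici (0:ℝ), 0 < n x := fun x hx => lt_of_lt_of_le hεn (hn x hx)
  have hIoi : ∀ x ∈ Ioi (0:ℝ), x ∈ Ici (0:ℝ) := fun x hx => mem_Ici.2 (le_of_lt (mem_Ioi.1 hx))
  have k1 : ∀ x ∈ Ici (0:ℝ), n x * u x = uinf := by
    apply aux_const (fun x => n x * u x) uinf (hnc.mul huc)
    · intro x hx
      exact ((dn x hx).mul (du x hx)).congr_deriv (e1 x hx)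
    · simpa using hnl.mul hul
  have hu0 : ∀ x ∈ Ici (0:ℝ), u x ≠ 0 := by
    intro x hx h0
    have := k1 x hx
    rw [h0] at this; linarith
  have k2 : ∀ x ∈ Ici (0:ℝ), T x * n x ^ (1 - γ) = Tinf := by
    apply aux_const (fun x => T x * n x ^ (1 - γ)) Tinf
    · exact hTc.mul (hnc.rpow_const fun x hx => Or.inl (hnp x hx).ne')
    · intro x hx
      have hx' := hIoi x hx
      have hnx := hnp x hx'
      have := (dT x hx).mul ((dn x hx).rpow_const (p := 1 - γ) (Or.inl hnx.ne'))
      refine this.congr_deriv ?_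
      have hpow : n x ^ (1 - γ) = n x * n x ^ (1 - γ - 1) := by
        rw [Real.rpow_sub_one hnx.ne']; field_simp
      rw [hpow]
      have E1 := e1 x hx
      have E3 := e3 x hx
      have : u x * (T' x * n x + T x * n' x * (1 - γ)) = 0 := by
        linear_combination n x * E3 - (γ - 1) * T x * E1
      have := (mul_eq_zero.1 this).resolve_left (hu0 x hx')
      linear_combination (n x ^ (1 - γ - 1)) * this
    · have := hTl.mul (hnl.rpow_const (p := 1 - γ) (Or.inl one_ne_zero))
      simpa using this
  have k3 : ∀ x ∈ Ici (0:ℝ), m / 2 * (u x)^2 + γ * R / (γ - 1) * T x - φ x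
      = m / 2 * uinf^2 + γ * R / (γ - 1) * Tinf := by
    apply aux_const (fun x => m / 2 * (u x)^2 + γ * R / (γ - 1) * T x - φ x)
    · exact ((continuousOn_const.mul (huc.pow 2)).add (continuousOn_const.mul hTc)).sub hφc
    · intro x hx
      have hx' := hIoi x hx
      have hnx := hnp x hx'
      have := ((((du x hx).pow 2).const_mul (m/2)).add ((dT x hx).const_mul (γ * R / (γ - 1)))).sub
        (dφ x hx)
      refine this.congr_deriv ?_
      have E1 := e1 x hx
      have E2 := e2 x hx
      have E3 := e3 x hx
      have hz : T' x * n x = (γ - 1) * T x * n' x := by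
        have : u x * (T' x * n x + T x * n' x * (1 - γ)) = 0 := by
          linear_combination n x * E3 - (γ - 1) * T x * E1
        have := (mul_eq_zero.1 this).resolve_left (hu0 x hx')
        linear_combination this
      have hz2 : n x * (m * u x * u' x + γ * R / (γ - 1) * T' x - φd x) = 0 := by
        have : γ * R / (γ - 1) * (T' x * n x) = γ * R * T x * n' x := by
          rw [hz]; field_simp
        linear_combination E2 + this - R * hz
      have := (mul_eq_zero.1 hz2).resolve_left hnx.ne'
      rw [← this]; norm_num; ring
    · simpa using ((((hul.pow 2).const_mul (m/2)).add (hTl.const_mul (γ * R / (γ - 1)))).sub hφl)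
  intro x hx
  have hnx := hnp x hx
  have r1 : u x = uinf / n x := by
    rw [eq_div_iff hnx.ne']; linarith [k1 x hx]
  have r2 : T x = Tinf * (n x) ^ (γ - 1) := by
    rw [← k2 x hx, mul_assoc, ← Real.rpow_add hnx]; simp
  refine ⟨r1, r2, ?_⟩
  have := k3 x hx
  rw [r1, r2] at this
  unfold bohmF
  linear_combination -this

lemma stationary_build (γ R Tinf m uinf φb η : ℝ) (g p pd : ℝ → ℝ) (hT : 0 < Tinf)
    (hγ : 1 < γ) (hη : η < 1) (S : Set ℝ)
    (hgc : Continuous g) (hgJ : ∀ s, g s ∈ Icc (1-η) (1+η)) (hg0 : g 0 = 1)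
    (hf' : ∀ n ∈ Icc (1-η) (1+η), bohmF' γ R Tinf m uinf n ≠ 0)
    (hgd : ∀ s ∈ S, HasDerivAt g (bohmF' γ R Tinf m uinf (g s))⁻¹ s)
    (hpc : Continuous p) (hpS : ∀ x ∈ Ici (0:ℝ), p x ∈ S) (hp0 : p 0 = φb)
    (hpl : Tendsto p atTop (𝓝 0))
    (hp1 : ∀ x ∈ Ioi (0:ℝ), HasDerivAt p (pd x) x)
    (hp2 : ∀ x ∈ Ioi (0:ℝ), HasDerivAt pd (g (p x) - Real.exp (-(p x))) x) :
    IsPlanarStationary γ R Tinf m uinf φb (fun x => g (p x)) (fun x => uinf / g (p x))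
      (fun x => Tinf * g (p x) ^ (γ - 1)) p := by
  have hgp : ∀ s, 0 < g s := fun s => by linarith [(hgJ s).1]
  have hnc : Continuous (fun x => g (p x)) := hgc.comp hpc
  have hne : ∀ x, g (p x) ≠ 0 := fun x => (hgp _).ne'
  have hnl : Tendsto (fun x => g (p x)) atTop (𝓝 1) := by
    have := (hgc.tendsto 0).comp hpl
    rwa [hg0] at this
  have hIoi : ∀ x ∈ Ioi (0:ℝ), x ∈ Ici (0:ℝ) := fun x hx => mem_Ici.2 (le_of_lt (mem_Ioi.1 hx))
  have hrc : ∀ a : ℝ, Continuous (fun x => g (p x) ^ a) := fun a =>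
    hnc.rpow_const fun x => Or.inl (hne x)
  have hpdc : ContinuousOn pd (Ioi 0) := fun x hx => (hp2 x hx).continuousAt.continuousWithinAt
  have hfc : Continuous (fun x => bohmF' γ R Tinf m uinf (g (p x))) := by
    unfold bohmF'
    exact ((continuous_const.div (hnc.pow 3) fun x => pow_ne_zero 3 (hne x)).neg).add
      (continuous_const.mul (hrc _))
  have hn'c : ContinuousOn (fun x => (bohmF' γ R Tinf m uinf (g (p x)))⁻¹ * pd x) (Ioi 0) :=
    (hfc.inv₀ fun x => hf' _ (hgJ _)).continuousOn.mul hpdc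
  have dn : ∀ x ∈ Ioi (0:ℝ), HasDerivAt (fun x => g (p x))
      ((bohmF' γ R Tinf m uinf (g (p x)))⁻¹ * pd x) x := fun x hx =>
    (hgd _ (hpS x (hIoi x hx))).comp x (hp1 x hx)
  refine ⟨hnc.continuousOn, (continuous_const.div hnc hne).continuousOn,
    (continuous_const.mul (hrc _)).continuousOn, hpc.continuousOn,
    ⟨1 - η, by linarith, fun x _ => (hgJ _).1⟩,
    ⟨Tinf * (1 - η) ^ (γ - 1), mul_pos hT (Real.rpow_pos_of_pos (by linarith) _), ?_⟩,
    hnl, ?_, ?_, hpl, hp0,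
    fun x => (bohmF' γ R Tinf m uinf (g (p x)))⁻¹ * pd x,
    fun x => -uinf / (g (p x))^2 * ((bohmF' γ R Tinf m uinf (g (p x)))⁻¹ * pd x),
    fun x => Tinf * ((γ - 1) * g (p x) ^ (γ - 2)) *
      ((bohmF' γ R Tinf m uinf (g (p x)))⁻¹ * pd x),
    pd, fun x => g (p x) - Real.exp (-(p x)), dn, hn'c, ?_, ?_, ?_, ?_, hp1, hpdc, hp2, ?_,
    ?_, ?_, ?_, ?_⟩
  · intro x _
    have := Real.rpow_le_rpow (by linarith : 0 ≤ 1 - η) (hgJ (p x)).1 (by linarith : 0 ≤ γ - 1)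
    exact mul_le_mul_of_nonneg_left this hT.le
  · have := (tendsto_const_nhds (x := uinf)).div hnl one_ne_zero
    rw [div_one] at this
    exact this
  · simpa using (hnl.rpow_const (p := γ - 1) (Or.inl one_ne_zero)).const_mul Tinf
  · intro x hx
    have := (hasDerivAt_const x uinf).div (dn x hx) (hne x)
    refine this.congr_deriv ?_
    ring
  · exact (continuous_const.div (hnc.pow 2) fun x => pow_ne_zero 2 (hne x)).continuousOn.mul hn'c
  · intro x hx
    have := ((dn x hx).rpow_const (p := γ - 1) (Or.inl (hne x))).const_mul Tinf
    refine this.congr_deriv ?_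
    rw [show γ - 1 - 1 = γ - 2 by ring]
    ring
  · exact (continuous_const.mul (continuous_const.mul (hrc _))).continuousOn.mul hn'c
  · exact (hnc.sub (Real.continuous_exp.comp hpc.neg)).continuousOn
  · intro x _
    have := hne x
    simp only
    field_simp
    ring
  · intro x _
    have h0 := hne x
    have hF := hf' _ (hgJ (p x))
    simp only
    set N := g (p x) with hN
    set F := bohmF' γ R Tinf m uinf N with hFd
    have hpow : N ^ (γ - 1) = N * N ^ (γ - 2) := by
      rw [show γ - 2 = γ - 1 - 1 by ring, Real.rpow_sub_one h0 (γ - 1)]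
      exact (mul_div_cancel₀ _ h0).symm
    have hFF : F = -(m * uinf^2 / N^3) + γ * R * Tinf * N ^ (γ - 2) := rfl
    rw [hpow]
    have : m * N * (uinf / N) * (-uinf / N ^ 2 * (F⁻¹ * pd x)) +
      R * (Tinf * ((γ - 1) * N ^ (γ - 2)) * (F⁻¹ * pd x) * N +
        Tinf * (N * N ^ (γ - 2)) * (F⁻¹ * pd x)) =
      N * (-(m * uinf^2 / N^3) + γ * R * Tinf * N ^ (γ - 2)) * (F⁻¹ * pd x) := by
      generalize F⁻¹ * pd x = z
      generalize N ^ (γ - 2) = y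
      field_simp
      ring
    rw [this, ← hFF]
    field_simp
  · intro x _
    have h0 := hne x
    simp only
    have hpow : g (p x) ^ (γ - 1) = g (p x) * g (p x) ^ (γ - 2) := by
      rw [show γ - 2 = γ - 1 - 1 by ring, Real.rpow_sub_one h0 (γ - 1)]
      exact (mul_div_cancel₀ _ h0).symm
    rw [hpow]
    generalize (bohmF' γ R Tinf m uinf (g (p x)))⁻¹ * pd x = z
    field_simp
    ring
  · intro x _
    rfl

lemma monotone_bound (φ : ℝ → ℝ) (φb δ : ℝ) (hb : |φb| ≤ δ) (h0 : φ 0 = φb)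
    (hl : Tendsto φ atTop (𝓝 0)) (hm : MonotoneOn φ (Ici 0) ∨ AntitoneOn φ (Ici 0)) :
    ∀ x ∈ Ici (0:ℝ), φ x ∈ Icc (-δ) δ := by
  have hδ : 0 ≤ δ := (abs_nonneg _).trans hb
  have hb' := abs_le.1 hb
  intro x hx
  have hx0 : (0:ℝ) ≤ x := hx
  have h00 : (0:ℝ) ∈ Ici (0:ℝ) := by simp
  rcases hm with hm | hm
  · have h1 := hm h00 hx hx0
    have h2 : φ x ≤ 0 := by
      apply ge_of_tendsto hl
      filter_upwards [eventually_ge_atTop x] with y hy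
      exact hm hx (mem_Ici.2 (hx0.trans hy)) hy
    exact ⟨by linarith, by linarith⟩
  · have h1 := hm h00 hx hx0
    have h2 : 0 ≤ φ x := by
      apply le_of_tendsto hl
      filter_upwards [eventually_ge_atTop x] with y hy
      exact hm hx (mem_Ici.2 (hx0.trans hy)) hy
    exact ⟨by linarith, by linarith⟩

lemma stay_branch (f n φ : ℝ → ℝ) (η δ : ℝ) (hη : 0 < η)
    (hnc : ContinuousOn n (Ici 0)) (hnl : Tendsto n atTop (𝓝 1))
    (hf1 : δ < f (1-η)) (hf2 : f (1+η) < -δ)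
    (hφ : ∀ x ∈ Ici (0:ℝ), φ x ∈ Icc (-δ) δ) (hfn : ∀ x ∈ Ici (0:ℝ), φ x = f (n x)) :
    ∀ x ∈ Ici (0:ℝ), n x ∈ Icc (1-η) (1+η) := by
  have hne1 : ∀ x ∈ Ici (0:ℝ), n x ≠ 1 - η := by
    intro x hx h
    have h1 := hfn x hx
    have h2 := (hφ x hx).2
    rw [h] at h1; linarith
  have hne2 : ∀ x ∈ Ici (0:ℝ), n x ≠ 1 + η := by
    intro x hx h
    have h1 := hfn x hx
    have h2 := (hφ x hx).1
    rw [h] at h1; linarith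
  intro x hx
  have hx0 : (0:ℝ) ≤ x := hx
  have hev : ∀ᶠ y in atTop, n y ∈ Ioo (1-η) (1+η) :=
    hnl (Ioo_mem_nhds (by linarith) (by linarith))
  obtain ⟨y, hy, hxy⟩ := (hev.and (eventually_ge_atTop x)).exists
  have hsub : Icc x y ⊆ Ici (0:ℝ) := fun z hz => mem_Ici.2 (hx0.trans hz.1)
  have hcc : ContinuousOn n (Icc x y) := hnc.mono hsub
  constructor
  · by_contra hlt
    push Not at hlt
    obtain ⟨z, hz, hz2⟩ := intermediate_value_Icc hxy hcc ⟨hlt.le, hy.1.le⟩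
    exact hne1 z (hsub hz) hz2
  · by_contra hlt
    push Not at hlt
    obtain ⟨z, hz, hz2⟩ := intermediate_value_Icc' hxy hcc ⟨hy.2.le, hlt.le⟩
    exact hne2 z (hsub hz) hz2

/-- Under the nondegenerate Bohm criterion `m u∞² > γRT∞ + 1`, `u∞ < 0`, there is
`δ > 0` such that for every `φ_b` with `0 < |φ_b| ≤ δ` the planar stationary problem
admits a solution with monotone potential `φ̃`, and this monotone solution is
unique. -/
theorem nondegenerate_existence_uniqueness
    (γ R Tinf m uinf : ℝ)
    (hγ : 1 < γ) (hR : 0 < R) (hT : 0 < Tinf) (hm : 0 < m) (hu : uinf < 0)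
    (hBohm : γ * R * Tinf + 1 < m * uinf ^ 2) :
    ∃ δ > 0, ∀ φb : ℝ, φb ≠ 0 → |φb| ≤ δ →
      (∃ n u T φ : ℝ → ℝ,
        IsPlanarStationary γ R Tinf m uinf φb n u T φ ∧
        (MonotoneOn φ (Set.Ici 0) ∨ AntitoneOn φ (Set.Ici 0))) ∧
      (∀ n₁ u₁ T₁ φ₁ n₂ u₂ T₂ φ₂ : ℝ → ℝ,
        IsPlanarStationary γ R Tinf m uinf φb n₁ u₁ T₁ φ₁ →
        (MonotoneOn φ₁ (Set.Ici 0) ∨ AntitoneOn φ₁ (Set.Ici 0)) →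
        IsPlanarStationary γ R Tinf m uinf φb n₂ u₂ T₂ φ₂ →
        (MonotoneOn φ₂ (Set.Ici 0) ∨ AntitoneOn φ₂ (Set.Ici 0)) →
        ∀ x ∈ Set.Ici (0 : ℝ),
          n₁ x = n₂ x ∧ u₁ x = u₂ x ∧ T₁ x = T₂ x ∧ φ₁ x = φ₂ x) := by
  obtain ⟨η, δ, c, C, g, hη0, hη1, hδ, hc, hgc, hgJ, hf'0, hgd, hgf, hg0, hfl, hfr, hslope⟩ :=
    aux_inverse (bohmF γ R Tinf m uinf) (bohmF' γ R Tinf m uinf)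
      (fun n hn => bohmF_deriv γ R Tinf m uinf hγ n hn)
      (by
        have h1 : (1:ℝ) ^ 3 ≠ 0 := by norm_num
        unfold bohmF'
        exact ((continuousAt_const.div (continuousAt_id.pow 3) h1).neg).add
          (continuousAt_const.mul (Real.continuousAt_rpow_const 1 _ (Or.inl one_ne_zero))))
      (by simp [bohmF]) (by simp [bohmF']; linarith)
  set h : ℝ → ℝ := fun s => g s - Real.exp (-s) with hh
  have hhc : Continuous h := by fun_prop
  have hh0 : h 0 = 0 := by simp [hh, hg0]
  have hmono : MonotoneOn h (Icc (-δ) δ) := by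
    intro s hs t ht hst
    have := (hslope s hs t ht hst).1
    have h2 : 0 ≤ c * (t - s) := mul_nonneg hc.le (by linarith)
    simp only [hh]; linarith
  have hz : (0:ℝ) ∈ Icc (-δ) δ := ⟨by linarith, hδ.le⟩
  refine ⟨δ, hδ, fun φb hφb hφδ => ⟨?_, ?_⟩⟩
  · have hb := abs_le.1 hφδ
    have main : ∃ p pd : ℝ → ℝ, Continuous p ∧ p 0 = φb ∧ (∀ x ∈ Ici (0:ℝ), p x ∈ Icc (-δ) δ) ∧
        (MonotoneOn p (Ici 0) ∨ AntitoneOn p (Ici 0)) ∧ Tendsto p atTop (𝓝 0) ∧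
        (∀ x ∈ Ioi (0:ℝ), HasDerivAt p (pd x) x) ∧
        (∀ x ∈ Ioi (0:ℝ), HasDerivAt pd (h (p x)) x) := by
      rcases lt_or_gt_of_ne hφb with hneg | hpos
      · obtain ⟨p, pd, q1, q2, q3, q4, q5, q6, q7⟩ := aux_exist (fun s => -(h (-s)))
          (by fun_prop) (-φb) c C (by linarith) hc
          (by
            intro s hs
            have := (hslope (-s) ⟨by linarith [hs.2], by linarith [hs.1]⟩ 0 hz
              (by linarith [hs.1])).1
            have e0 : h 0 - h (-s) = g 0 - Real.exp (-0) - (g (-s) - Real.exp (- -s)) := rfl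
            linarith)
          (by
            intro s hs
            have := (hslope (-s) ⟨by linarith [hs.2], by linarith [hs.1]⟩ 0 hz
              (by linarith [hs.1])).2
            have e0 : h 0 - h (-s) = g 0 - Real.exp (-0) - (g (-s) - Real.exp (- -s)) := rfl
            linarith)
        refine ⟨fun x => -(p x), fun x => -(pd x), q1.neg, by simp [q2], ?_, Or.inl ?_, ?_, ?_, ?_⟩
        · intro x hx
          have := q3 x hx
          exact ⟨by linarith [this.2], by linarith [this.1]⟩
        · intro x hx y hy hxy
          have := q4 hx hy hxy
          simp only; linarith
        · simpa using q5.neg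
        · intro x hx
          exact (q6 x hx).neg
        · intro x hx
          exact (q7 x hx).neg.congr_deriv (by simp)
      · obtain ⟨p, pd, q1, q2, q3, q4, q5, q6, q7⟩ := aux_exist h hhc φb c C hpos hc
          (by
            intro s hs
            have := (hslope 0 hz s ⟨by linarith [hs.1], by linarith [hs.2]⟩ hs.1).1
            have e0 : h s - h 0 = g s - Real.exp (-s) - (g 0 - Real.exp (-0)) := rfl
            linarith)
          (by
            intro s hs
            have := (hslope 0 hz s ⟨by linarith [hs.1], by linarith [hs.2]⟩ hs.1).2
            have e0 : h s - h 0 = g s - Real.exp (-s) - (g 0 - Real.exp (-0)) := rfl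
            linarith)
        refine ⟨p, pd, q1, q2, ?_, Or.inr q4, q5, q6, q7⟩
        intro x hx
        have := q3 x hx
        exact ⟨by linarith [this.1], by linarith [this.2]⟩
    obtain ⟨p, pd, q1, q2, q3, q4, q5, q6, q7⟩ := main
    exact ⟨_, _, _, p, stationary_build γ R Tinf m uinf φb η g p pd hT hγ hη1 (Icc (-δ) δ) hgc hgJ
      hg0 hf'0 hgd q1 q3 q2 q5 q6 q7, q4⟩
  · intro n₁ u₁ T₁ φ₁ n₂ u₂ T₂ φ₂ s1 m1 s2 m2
    have red : ∀ n u T φ : ℝ → ℝ, IsPlanarStationary γ R Tinf m uinf φb n u T φ →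
        (MonotoneOn φ (Ici 0) ∨ AntitoneOn φ (Ici 0)) →
        (∀ x ∈ Ici (0:ℝ), φ x ∈ Icc (-δ) δ) ∧
        (∀ x ∈ Ici (0:ℝ), n x = g (φ x) ∧ u x = uinf / n x ∧ T x = Tinf * n x ^ (γ - 1)) := by
      intro n u T φ hs hm'
      have hr := stationary_reduce γ R Tinf m uinf φb n u T φ hγ hu hs
      obtain ⟨hnc, -, -, -, -, -, hnl, -, -, hφl, hφ0, -⟩ := hs
      have hbd := monotone_bound φ φb δ hφδ hφ0 hφl hm'
      have hst := stay_branch (bohmF γ R Tinf m uinf) n φ η δ hη0 hnc hnl hfl hfr hbd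
        (fun x hx => (hr x hx).2.2)
      refine ⟨hbd, fun x hx => ⟨?_, (hr x hx).1, (hr x hx).2.1⟩⟩
      have h3 := (hr x hx).2.2
      rw [h3]
      exact (hgf _ (hst x hx) (h3 ▸ hbd x hx)).symm
    obtain ⟨b1, r1⟩ := red _ _ _ _ s1 m1
    obtain ⟨b2, r2⟩ := red _ _ _ _ s2 m2
    obtain ⟨-, -, -, c1, -, -, -, -, -, l1, z1, -, -, -, pd, pdd, -, -, -, -, -, -, p1, -, p2, -,
      -, -, -, e1⟩ := s1
    obtain ⟨-, -, -, c2, -, -, -, -, -, l2, z2, -, -, -, qd, qdd, -, -, -, -, -, -, q1, -, q2, -,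
      -, -, -, e2⟩ := s2
    have hIoi : ∀ x ∈ Ioi (0:ℝ), x ∈ Ici (0:ℝ) := fun x hx => mem_Ici.2 (le_of_lt (mem_Ioi.1 hx))
    have huq := aux_unique h δ hmono φ₁ φ₂ pd qd c1 c2 b1 b2 p1 q1
      (fun x hx => (p2 x hx).congr_deriv (by rw [e1 x hx, (r1 x (hIoi x hx)).1]))
      (fun x hx => (q2 x hx).congr_deriv (by rw [e2 x hx, (r2 x (hIoi x hx)).1]))
      (by rw [z1, z2]) l1 l2
    intro x hx
    have h1 := huq x hx
    obtain ⟨a1, a2, a3⟩ := r1 x hx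
    obtain ⟨d1, d2, d3⟩ := r2 x hx
    have hn : n₁ x = n₂ x := by rw [a1, d1, h1]
    exact ⟨hn, by rw [a2, d2, hn], by rw [a3, d3, hn], h1⟩
end
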